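/- arXiv:2405.12169 — 9 statements merged into one kernel-verified Lean document; each statement's English description precedes it below -/
import Mathlib

section
/- Let R be a commutative ring and S a faithfully flat commutative R-algebra. Then there exist: a nonempty partially ordered set ι in which every countable subset has an upper bound (an ω₁-directed poset); a directed system of commutative R-algebras (S_i)_{i∈ι} with R-algebra transition homomorphisms t_{ij} : S_i → S_j for i ≤ j satisfying t_{ii} = id and t_{jk} ∘ t_{ij} = t_{ik} for i ≤ j ≤ k; and R-algebra homomorphisms g_i : S_i → S with g_j ∘ t_{ij} = g_i, such that: (1) each S_i is a faithfully flat R-module; (2) each S_i is countably presented as an R-algebra, i.e., there exists a surjective R-algebra homomorphism from the polynomial algebra MvPolynomial ℕ R onto S_i whose kernel is a countably generated ideal; (3) every element of S lies in the range of some g_i; (4) for every i and all x, y ∈ S_i with g_i(x) = g_i(y), there exists j ≥ i with t_{ij}(x) = t_{ij}(y). (Every faithfully flat algebra is an ω₁-directed colimit of countably presented faithfully flat algebras; this is the paper's Proposition due to Scholze.) -/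
/-!
Every faithfully flat algebra over a commutative ring is an ω₁-directed colimit of
countably presented faithfully flat algebras (Scholze).
-/

universe u

/-- The data of a presentation of a faithfully flat `R`-algebra `S` as an `ω₁`-directed
colimit of countably presented faithfully flat `R`-algebras. -/
structure OmegaOneDirectedFFPresentation (R S : Type u) [CommRing R] [CommRing S]
    [Algebra R S] where
  /-- the index poset -/
  ι : Type u
  [partialOrder : PartialOrder ι]
  nonempty : Nonempty ι
  /-- the index poset is `ω₁`-directed: every countable subset has an upper bound -/
  countable_bddAbove : ∀ T : Set ι, T.Countable → ∃ ub : ι, ∀ i ∈ T, i ≤ ub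
  /-- the directed system of `R`-algebras -/
  obj : ι → Type u
  [commRing : ∀ i, CommRing (obj i)]
  [algebra : ∀ i, Algebra R (obj i)]
  /-- the transition homomorphisms -/
  t : ∀ {i j : ι}, i ≤ j → (obj i →ₐ[R] obj j)
  t_id : ∀ i : ι, t (le_refl i) = AlgHom.id R (obj i)
  t_comp : ∀ {i j k : ι} (hij : i ≤ j) (hjk : j ≤ k),
    (t hjk).comp (t hij) = t (hij.trans hjk)
  /-- the cocone homomorphisms to `S` -/
  g : ∀ i : ι, obj i →ₐ[R] S
  g_comp : ∀ {i j : ι} (hij : i ≤ j), (g j).comp (t hij) = g i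
  /-- (1) each term is faithfully flat as an `R`-module -/
  faithfullyFlat : ∀ i, Module.FaithfullyFlat R (obj i)
  /-- (2) each term is countably presented as an `R`-algebra -/
  countablyPresented : ∀ i, ∃ f : MvPolynomial ℕ R →ₐ[R] obj i,
    Function.Surjective f ∧
      ∃ gens : Set (MvPolynomial ℕ R), gens.Countable ∧ Ideal.span gens = RingHom.ker f
  /-- (3) every element of `S` lies in the range of some `g i` -/
  jointly_surjective : ∀ s : S, ∃ (i : ι) (x : obj i), g i x = s
  /-- (4) elements identified in `S` are identified at some later stage -/
  eventually_eq : ∀ (i : ι) (x y : obj i), g i x = g i y →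
    ∃ (j : ι) (hij : i ≤ j), t hij x = t hij y

/-!
Fix a surjection `φ` from a polynomial ring onto `S`. Sets of variables together with sets of
elements of `ker φ` form a poset, and `S` is the colimit over it of the quotients these
generators and relations define. The task is to show that the countable pairs whose quotient is
flat are cofinal among the countable ones; such a quotient is then faithfully flat because
it maps to the faithfully flat algebra `S`.

By the equational criterion, flatness of `S` means that finitely many polynomials, modulo finitely
many elements of `ker φ`, factor through a finite free module up to `ker φ`. Adjoin the variables
and relations that such a factorization involves and iterate `ω` times. As `R` may be uncountable,
only monomials and monomial multiples of the relations are treated at each step: there are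
countably many of them, and they span the polynomial ring and the ideal of relations over `R`.
-/

open MvPolynomial Function
open scoped Pointwise

section Flatness

variable {R V M : Type*} [CommRing R] [AddCommGroup V] [Module R V]
  [AddCommGroup M] [Module R M] {π : V →ₗ[R] M}

theorem exists_finite_factorization_id_on [Module.Projective R V] (F : Set V) (hF : F.Finite) :
    ∃ (T : Finset V) (r : V →ₗ[R] T →₀ R) (i : (T →₀ R) →ₗ[R] V), ∀ v ∈ F, i (r v) = v := by
  classical
  obtain ⟨s, hs⟩ := Module.projective_def.mp ‹Module.Projective R V›
  let T : Finset V := hF.toFinset.biUnion fun v ↦ (s v).support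
  refine ⟨T, Finsupp.lcomapDomain Subtype.val Subtype.val_injective ∘ₗ s,
    Finsupp.linearCombination R Subtype.val, fun v hv ↦ ?_⟩
  have hvT : ↑(s v).support ⊆ Set.range (Subtype.val : T → V) := by
    rw [Subtype.range_val]
    exact Finset.subset_biUnion_of_mem (fun v ↦ (s v).support) (hF.mem_toFinset.mpr hv)
  calc Finsupp.linearCombination R (id ∘ Subtype.val)
        ((s v).comapDomain Subtype.val (Subtype.val_injective (p := (· ∈ T))).injOn)
      = Finsupp.linearCombination R id (s v) := by
        rw [← Finsupp.linearCombination_mapDomain,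
          Finsupp.mapDomain_comapDomain _ Subtype.val_injective _ hvT]
    _ = v := hs v

theorem exists_factorization_modulo_ker [Module.Projective R V] [Module.Flat R M]
    (hπ : Surjective π) {F G : Set V} (hF : F.Finite) (hG : G.Finite) (hGπ : G ⊆ LinearMap.ker π) :
    ∃ (k : ℕ) (a : V →ₗ[R] Fin k →₀ R) (q : (Fin k →₀ R) →ₗ[R] V),
      (∀ g ∈ G, a g = 0) ∧ ∀ m ∈ F, π (q (a m)) = π m := by
  obtain ⟨T, r, i, hir⟩ := exists_finite_factorization_id_on (R := R) (F ∪ G) (hF.union hG)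
  have : Module.Finite R (Submodule.span R G) := Module.Finite.span_of_finite R hG
  have hzero : (π ∘ₗ i) ∘ₗ (r ∘ₗ (Submodule.span R G).subtype) = 0 := by
    have hle : Submodule.span R G ≤ LinearMap.ker (π ∘ₗ i ∘ₗ r) :=
      Submodule.span_le.mpr fun g hg ↦ by
        simpa [hir g (Or.inr hg)] using hGπ hg
    ext g
    exact hle g.2
  obtain ⟨k, a, y, hya, ha⟩ := Module.Flat.exists_factorization_of_comp_eq_zero_of_free hzero
  obtain ⟨q, rfl⟩ := Module.projective_lifting_property π y hπ
  refine ⟨k, a ∘ₗ r, q, fun g hg ↦ LinearMap.congr_fun ha ⟨g, Submodule.subset_span hg⟩,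
    fun m hm ↦ ?_⟩
  simpa [hir m (Or.inl hm)] using (LinearMap.congr_fun hya (r m)).symm

theorem flat_of_forall_exists_factorization_modulo_ker (hπ : Surjective π) {A B : Set V}
    (hA : Submodule.span R A = ⊤) (hB : Submodule.span R B = LinearMap.ker π)
    (h : ∀ F G : Set V, F.Finite → G.Finite → F ⊆ A → G ⊆ B →
      ∃ (k : ℕ) (a : V →ₗ[R] Fin k →₀ R) (q : (Fin k →₀ R) →ₗ[R] V),
        (∀ g ∈ G, a g = 0) ∧ ∀ m ∈ F, π (q (a m)) = π m) :
    Module.Flat R M := by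
  refine Module.Flat.of_forall_exists_factorization fun {l f x} hxf ↦ ?_
  obtain ⟨x, rfl⟩ := Module.projective_lifting_property π x hπ
  obtain ⟨G, hGB, hfG⟩ := Submodule.mem_span_finite_of_mem_span
    (show x f ∈ Submodule.span R B from hB ▸ hxf)
  obtain ⟨F, hFA, hxF⟩ : ∃ F : Finset V, ↑F ⊆ A ∧ LinearMap.range x ≤ Submodule.span R F := by
    obtain ⟨Y, hY⟩ := Module.Finite.iff_fg.mp (Module.Finite.range x)
    have := Submodule.subset_span_finite_of_subset_span (R := R) (s := A) (t := Y) (by simp [hA])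
    obtain ⟨F, hFA, hYF⟩ := this
    exact ⟨F, hFA, hY ▸ Submodule.span_le.mpr hYF⟩
  obtain ⟨k, a, q, hG, hF⟩ := h F G F.finite_toSet G.finite_toSet hFA hGB
  refine ⟨k, a ∘ₗ x, π ∘ₗ q, LinearMap.ext fun v ↦ ?_, ?_⟩
  · have hle : Submodule.span R F ≤ LinearMap.eqLocus π (π ∘ₗ q ∘ₗ a) :=
      Submodule.span_le.mpr fun m hm ↦ (hF m hm).symm
    exact hle (hxF ⟨v, rfl⟩)
  · have hle : Submodule.span R G ≤ LinearMap.ker a := Submodule.span_le.mpr hG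
    exact hle hfG

end Flatness

theorem faithfullyFlat_of_flat_of_algHom {R A S : Type*} [CommRing R] [CommRing A] [CommRing S]
    [Algebra R A] [Algebra R S] [Module.Flat R A] [Module.FaithfullyFlat R S] (f : A →ₐ[R] S) :
    Module.FaithfullyFlat R A := by
  refine .of_comap_surjective fun p ↦ ?_
  obtain ⟨q, rfl⟩ := PrimeSpectrum.comap_surjective_of_faithfullyFlat (B := S) p
  refine ⟨q.comap f, ?_⟩
  rw [← f.comp_algebraMap]
  rfl

theorem apply_mem_of_forall_single_one_mem {R V ι : Type*} [Semiring R] [AddCommMonoid V]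
    [Module R V] {q : (ι →₀ R) →ₗ[R] V} {N : Submodule R V}
    (hq : ∀ i, q (Finsupp.single i 1) ∈ N) (v : ι →₀ R) : q v ∈ N := by
  have hle : Submodule.span R (Set.range fun i : ι ↦ Finsupp.single i (1 : R)) ≤ N.comap q :=
    Submodule.span_le.mpr (Set.range_subset_iff.mpr hq)
  exact hle (Finsupp.basisSingleOne.mem_span v)

theorem span_mul_eq_ker_mkₐ {R A : Type*} [CommSemiring R] [CommRing A] [Algebra R A] {M : Set A}
    (hM : Submodule.span R M = ⊤) (B : Set A) :
    Submodule.span R (M * B) =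
      LinearMap.ker (Ideal.Quotient.mkₐ R (Ideal.span B)).toLinearMap := by
  rw [← smul_eq_mul, Submodule.span_smul_of_span_eq_top hM]
  ext p
  exact Ideal.Quotient.eq_zero_iff_mem.symm

theorem rename_killCompl_of_mem_supported {R σ : Type*} [CommSemiring R] {s : Set σ}
    {p : MvPolynomial σ R} (hp : p ∈ supported R s) :
    rename (↑) (killCompl (Subtype.val_injective (p := (· ∈ s))) p) = p := by
  rw [supported_eq_range_rename] at hp
  obtain ⟨p, rfl⟩ := hp
  exact congrArg _ (killCompl_rename_app _ p)

theorem ker_comp_eq_map_ker_sup_ker {A B C : Type*} [CommRing A] [CommRing B] [CommRing C]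
    (g : B →+* C) {h : A →+* B} {s : B →+* A} (hs : h.comp s = RingHom.id B) :
    RingHom.ker (g.comp h) = (RingHom.ker g).map s ⊔ RingHom.ker h := by
  have hh : Surjective h := fun b ↦ ⟨s b, RingHom.congr_fun hs b⟩
  rw [← Ideal.comap_map_of_surjective' h hh, Ideal.map_map, hs, Ideal.map_id, RingHom.comap_ker]

theorem ker_killCompl {R σ τ : Type*} [CommSemiring R] {f : σ → τ} (hf : Injective f) :
    RingHom.ker (killCompl (R := R) hf) = Ideal.span (X '' (Set.range f)ᶜ) := by
  refine le_antisymm (fun p hp ↦ mem_ideal_span_X_image.mpr fun m hm ↦ ?_) ?_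
  · contrapose! hm
    have hmf : (m.support : Set τ) ⊆ Set.range f := fun i hi ↦ by
      by_contra hif
      exact Finsupp.mem_support_iff.mp hi (hm i hif)
    rw [notMem_support_iff, ← m.mapDomain_comapDomain f hf hmf, ← coeff_killCompl hf,
      RingHom.mem_ker.mp hp, coeff_zero]
  · rw [Ideal.span_le]
    rintro _ ⟨i, hi, rfl⟩
    exact killCompl_monomial_eq_zero_of_notMem_range hf 1 (a := i) (by simp) hi

theorem exists_countable_presentation {R τ : Type*} [CommRing R] [Countable τ]
    {B : Set (MvPolynomial τ R)} (hB : B.Countable) :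
    ∃ f : MvPolynomial ℕ R →ₐ[R] MvPolynomial τ R ⧸ Ideal.span B, Surjective f ∧
      ∃ gens : Set (MvPolynomial ℕ R), gens.Countable ∧ Ideal.span gens = RingHom.ker f := by
  obtain ⟨e, he⟩ := exists_injective_nat τ
  refine ⟨(Ideal.Quotient.mkₐ R _).comp (killCompl he),
    (Ideal.Quotient.mkₐ_surjective R _).comp fun p ↦ ⟨rename e p, killCompl_rename_app he p⟩,
    rename e '' B ∪ X '' (Set.range e)ᶜ, (hB.image _).union ((Set.to_countable _).image _), ?_⟩
  have hker := ker_comp_eq_map_ker_sup_ker (Ideal.Quotient.mk (Ideal.span B))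
    (congrArg AlgHom.toRingHom (killCompl_comp_rename (R := R) he))
  rw [Ideal.span_union, ← ker_killCompl he]
  rw [Ideal.mk_ker, Ideal.map_span] at hker
  exact hker.symm

/-- A set of variables and a set of relations of the presentation `φ`. A relation may involve
variables outside `gens`; it is then ignored in `Subpresentation.Stage`. -/
structure Subpresentation {R S σ : Type*} [CommRing R] [CommRing S] [Algebra R S]
    (φ : MvPolynomial σ R →ₐ[R] S) where
  gens : Set σ
  rels : Set (MvPolynomial σ R)
  rels_subset_ker : rels ⊆ RingHom.ker φ

namespace Subpresentation

variable {R S σ : Type*} [CommRing R] [CommRing S] [Algebra R S]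
  {φ : MvPolynomial σ R →ₐ[R] S} {P Q : Subpresentation φ}

instance : PartialOrder (Subpresentation φ) :=
  PartialOrder.lift (fun P ↦ (P.gens, P.rels)) fun P Q h ↦ by
    cases P; cases Q; simpa using h

theorem gens_mono (h : P ≤ Q) : P.gens ⊆ Q.gens := h.1

theorem rels_mono (h : P ≤ Q) : P.rels ⊆ Q.rels := h.2

/-- Countability of both the set of variables and the set of relations. -/
def IsCountable (P : Subpresentation φ) : Prop := P.gens.Countable ∧ P.rels.Countable

/-- The enlargement of a subpresentation by further variables and relations. -/
def adjoin (P : Subpresentation φ) (A : Set σ) (B : Set (MvPolynomial σ R))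
    (hB : B ⊆ RingHom.ker φ) : Subpresentation φ where
  gens := P.gens ∪ A
  rels := P.rels ∪ B
  rels_subset_ker := Set.union_subset P.rels_subset_ker hB

/-- The union of a family of subpresentations, an upper bound of the family. -/
def iUnion {ι : Sort*} (P : ι → Subpresentation φ) : Subpresentation φ where
  gens := ⋃ i, (P i).gens
  rels := ⋃ i, (P i).rels
  rels_subset_ker := Set.iUnion_subset fun i ↦ (P i).rels_subset_ker

theorem le_adjoin (A : Set σ) (B : Set (MvPolynomial σ R)) (hB : B ⊆ RingHom.ker φ) :
    P ≤ P.adjoin A B hB :=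
  ⟨Set.subset_union_left, Set.subset_union_left⟩

theorem le_iUnion {ι : Sort*} (P : ι → Subpresentation φ) (i : ι) : P i ≤ iUnion P :=
  ⟨Set.subset_iUnion (fun i ↦ (P i).gens) i, Set.subset_iUnion (fun i ↦ (P i).rels) i⟩

theorem IsCountable.adjoin (hP : P.IsCountable) {A : Set σ} {B : Set (MvPolynomial σ R)}
    (hA : A.Countable) (hB : B.Countable) (hBφ : B ⊆ RingHom.ker φ) :
    (P.adjoin A B hBφ).IsCountable :=
  ⟨hP.1.union hA, hP.2.union hB⟩

theorem IsCountable.iUnion {ι : Sort*} [Countable ι] {P : ι → Subpresentation φ}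
    (hP : ∀ i, (P i).IsCountable) : (iUnion P).IsCountable :=
  ⟨Set.countable_iUnion fun i ↦ (hP i).1, Set.countable_iUnion fun i ↦ (hP i).2⟩

section Stage

variable (P) in
/-- The ideal generated by the relations that involve no variable outside `P.gens`. -/
noncomputable def ideal : Ideal (MvPolynomial P.gens R) :=
  Ideal.span (rename (↑) ⁻¹' P.rels)

variable (P) in
/-- The algebra presented by `P`. -/
abbrev Stage : Type _ := MvPolynomial P.gens R ⧸ P.ideal

theorem rename_inclusion_mem_ideal (h : P ≤ Q) {p : MvPolynomial P.gens R}
    (hp : rename (↑) p ∈ Q.rels) : rename (Set.inclusion (gens_mono h)) p ∈ Q.ideal := by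
  refine Ideal.subset_span ?_
  rwa [Set.mem_preimage, rename_rename]

theorem ideal_le_comap (h : P ≤ Q) :
    P.ideal ≤ Q.ideal.comap (rename (Set.inclusion (gens_mono h))) :=
  Ideal.span_le.mpr fun _ hp ↦ rename_inclusion_mem_ideal h (rels_mono h hp)

/-- The transition homomorphism of the system `Subpresentation.Stage`. -/
noncomputable def map (h : P ≤ Q) : P.Stage →ₐ[R] Q.Stage :=
  Ideal.quotientMapₐ _ (rename (Set.inclusion (gens_mono h))) (ideal_le_comap h)

theorem ideal_le_ker : P.ideal ≤ RingHom.ker (φ.comp (rename (↑))) :=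
  Ideal.span_le.mpr fun _ hp ↦ P.rels_subset_ker hp

variable (P) in
/-- The homomorphism induced by `φ`, a leg of the cocone over `Subpresentation.Stage`. -/
noncomputable def toTarget : P.Stage →ₐ[R] S :=
  Ideal.Quotient.liftₐ _ (φ.comp (rename (↑))) ideal_le_ker

@[simp]
theorem map_mk (h : P ≤ Q) (p : MvPolynomial P.gens R) :
    map h (Ideal.Quotient.mk _ p) =
      Ideal.Quotient.mk _ (rename (Set.inclusion (gens_mono h)) p) := rfl

@[simp]
theorem toTarget_mk (p : MvPolynomial P.gens R) :
    P.toTarget (Ideal.Quotient.mk _ p) = φ (rename (↑) p) := rfl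

theorem map_refl : map (le_refl P) = AlgHom.id R P.Stage :=
  Ideal.Quotient.algHom_ext R (MvPolynomial.algHom_ext fun i ↦ by simp)

theorem map_comp_map {P₁ P₂ P₃ : Subpresentation φ} (h₁₂ : P₁ ≤ P₂) (h₂₃ : P₂ ≤ P₃) :
    (map h₂₃).comp (map h₁₂) = map (h₁₂.trans h₂₃) :=
  Ideal.Quotient.algHom_ext R (MvPolynomial.algHom_ext fun i ↦ by simp)

theorem toTarget_comp_map (h : P ≤ Q) : Q.toTarget.comp (map h) = P.toTarget :=
  Ideal.Quotient.algHom_ext R (MvPolynomial.algHom_ext fun i ↦ by simp)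

theorem exists_stage_presentation (hP : P.IsCountable) :
    ∃ f : MvPolynomial ℕ R →ₐ[R] P.Stage, Surjective f ∧
      ∃ gens : Set (MvPolynomial ℕ R), gens.Countable ∧ Ideal.span gens = RingHom.ker f :=
  have : Countable P.gens := hP.1
  exists_countable_presentation (hP.2.preimage (rename_injective _ Subtype.val_injective))

end Stage

section Flat

variable (P) in
/-- The monomials in the variables of `P`, seen in the full polynomial ring: a spanning set of
`MvPolynomial P.gens R` which is countable when `P` is, whatever the size of `R`. -/
def monomials : Set (MvPolynomial σ R) :=
  (fun m ↦ monomial m 1) '' {m : σ →₀ ℕ | ↑m.support ⊆ P.gens}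

variable (P) in
/-- The monomial multiples of the relations of `P`; those in the variables of `P` span `P.ideal`
over `R`. -/
def multiples : Set (MvPolynomial σ R) := P.monomials * P.rels

theorem monomials_countable (hP : P.IsCountable) : P.monomials.Countable := by
  have : Countable P.gens := hP.1
  refine Set.Countable.image ?_ _
  refine (Set.countable_range (Finsupp.mapDomain ((↑) : P.gens → σ))).mono fun m hm ↦ ?_
  exact ⟨_, Finsupp.mapDomain_comapDomain _ Subtype.val_injective m (by simpa using hm)⟩

theorem multiples_countable (hP : P.IsCountable) : P.multiples.Countable :=
  (monomials_countable hP).image2 hP.2 _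

theorem multiples_subset_ker : P.multiples ⊆ RingHom.ker φ := by
  rintro _ ⟨m, -, b, hb, rfl⟩
  exact Ideal.mul_mem_left _ m (P.rels_subset_ker hb)

theorem monomials_mono (h : P ≤ Q) : P.monomials ⊆ Q.monomials :=
  Set.image_mono fun _ hm ↦ hm.trans (gens_mono h)

theorem multiples_mono (h : P ≤ Q) : P.multiples ⊆ Q.multiples :=
  Set.mul_subset_mul (monomials_mono h) (rels_mono h)

theorem rename_monomial_mem_monomials (m : P.gens →₀ ℕ) :
    rename (↑) (monomial m (1 : R)) ∈ P.monomials := by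
  classical
  rw [rename_monomial]
  refine ⟨_, fun i hi ↦ ?_, rfl⟩
  obtain ⟨j, -, rfl⟩ := Finset.mem_image.mp (Finsupp.mapDomain_support hi)
  exact j.2

theorem monomials_iUnion_subset {P : ℕ → Subpresentation φ} (hP : Monotone P) :
    (iUnion P).monomials ⊆ ⋃ n, (P n).monomials := by
  rintro _ ⟨m, hm, rfl⟩
  have hdir : Directed (· ⊆ ·) fun n ↦ (P n).gens :=
    Monotone.directed_le fun _ _ h ↦ gens_mono (hP h)
  obtain ⟨n, hn⟩ := hdir.exists_mem_subset_of_finset_subset_biUnion hm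
  exact Set.mem_iUnion.mpr ⟨n, m, hn, rfl⟩

theorem multiples_iUnion_subset {P : ℕ → Subpresentation φ} (hP : Monotone P) :
    (iUnion P).multiples ⊆ ⋃ n, (P n).multiples := by
  rintro _ ⟨m, hm, b, hb, rfl⟩
  obtain ⟨i, hi⟩ := Set.mem_iUnion.mp (monomials_iUnion_subset hP hm)
  obtain ⟨j, hj⟩ := Set.mem_iUnion.mp hb
  exact Set.mem_iUnion.mpr ⟨max i j, Set.mul_mem_mul
    (monomials_mono (hP (le_max_left i j)) hi) (rels_mono (hP (le_max_right i j)) hj)⟩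

/-- The equational criterion for flatness of `P.Stage`, with solutions in `Q`: finite sets of
monomials of `P` factor through a finite free module, killing a given finite set of multiples of
relations, and the factorization is defined over `Q` and holds up to relations of `Q`. -/
def IsTrivializedBy (P Q : Subpresentation φ) : Prop :=
  ∀ F G : Set (MvPolynomial σ R), F.Finite → G.Finite → F ⊆ P.monomials → G ⊆ P.multiples →
    ∃ (k : ℕ) (a : MvPolynomial σ R →ₗ[R] Fin k →₀ R)
      (q : (Fin k →₀ R) →ₗ[R] MvPolynomial σ R),
      (∀ v, q v ∈ supported R Q.gens) ∧ (∀ g ∈ G, a g = 0) ∧ ∀ m ∈ F, m - q (a m) ∈ Q.rels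

theorem flat_stage_of_isTrivializedBy_self (hP : P.IsTrivializedBy P) :
    Module.Flat R P.Stage := by
  let ι : MvPolynomial P.gens R →ₐ[R] MvPolynomial σ R := rename (↑)
  let κ : MvPolynomial σ R →ₐ[R] MvPolynomial P.gens R := killCompl Subtype.val_injective
  have hspan : Submodule.span R (Set.range fun m ↦ monomial m (1 : R)) = ⊤ :=
    (basisMonomials P.gens R).span_eq
  refine flat_of_forall_exists_factorization_modulo_ker (Ideal.Quotient.mkₐ_surjective R P.ideal)
    hspan (span_mul_eq_ker_mkₐ hspan (ι ⁻¹' P.rels)) fun F G hF hG hF_mon hG_mul ↦ ?_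
  have hFP : ι '' F ⊆ P.monomials := by
    rintro _ ⟨p, hp, rfl⟩
    obtain ⟨m, rfl⟩ := hF_mon hp
    exact rename_monomial_mem_monomials m
  have hGP : ι '' G ⊆ P.multiples := by
    rintro _ ⟨p, hp, rfl⟩
    obtain ⟨_, ⟨m, rfl⟩, b, hb, rfl⟩ := hG_mul hp
    exact ⟨_, rename_monomial_mem_monomials m, _, hb, (map_mul ι _ _).symm⟩
  obtain ⟨k, a, q, hq, haG, haF⟩ := hP _ _ (hF.image ι) (hG.image ι) hFP hGP
  refine ⟨k, a ∘ₗ ι.toLinearMap, κ.toLinearMap ∘ₗ q, fun g hg ↦ haG _ ⟨g, hg, rfl⟩,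
    fun m hm ↦ (Ideal.Quotient.eq.mpr (Ideal.subset_span ?_)).symm⟩
  have hrel : ι m - ι (κ (q (a (ι m)))) ∈ P.rels := by
    rw [rename_killCompl_of_mem_supported (hq _)]
    exact haF _ ⟨m, hm, rfl⟩
  rwa [← map_sub] at hrel

theorem isTrivializedBy_iUnion {P : ℕ → Subpresentation φ} (hmono : Monotone P)
    (hP : ∀ n, (P n).IsTrivializedBy (P (n + 1))) : (iUnion P).IsTrivializedBy (iUnion P) := by
  intro F G hF hG hFP hGP
  lift F to Finset (MvPolynomial σ R) using hF
  lift G to Finset (MvPolynomial σ R) using hG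
  have hmon : Directed (· ⊆ ·) fun n ↦ (P n).monomials :=
    Monotone.directed_le fun _ _ h ↦ monomials_mono (hmono h)
  have hmul : Directed (· ⊆ ·) fun n ↦ (P n).multiples :=
    Monotone.directed_le fun _ _ h ↦ multiples_mono (hmono h)
  obtain ⟨i, hi⟩ := hmon.exists_mem_subset_of_finset_subset_biUnion
    (hFP.trans (monomials_iUnion_subset hmono))
  obtain ⟨j, hj⟩ := hmul.exists_mem_subset_of_finset_subset_biUnion
    (hGP.trans (multiples_iUnion_subset hmono))
  obtain ⟨k, a, q, hq, haG, haF⟩ := hP (max i j) F G F.finite_toSet G.finite_toSet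
    (hi.trans (monomials_mono (hmono (le_max_left i j))))
    (hj.trans (multiples_mono (hmono (le_max_right i j))))
  have hle := le_iUnion P (max i j + 1)
  exact ⟨k, a, q, fun v ↦ supported_mono (gens_mono hle) (hq v), haG,
    fun m hm ↦ rels_mono hle (haF m hm)⟩

theorem exists_isTrivializedBy [Module.Flat R S] (hφ : Surjective φ) (hP : P.IsCountable) :
    ∃ Q, P ≤ Q ∧ Q.IsCountable ∧ P.IsTrivializedBy Q := by
  let I : Set (Set (MvPolynomial σ R) × Set (MvPolynomial σ R)) :=
    {F | F.Finite ∧ F ⊆ P.monomials} ×ˢ {G | G.Finite ∧ G ⊆ P.multiples}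
  have : Countable I := (Set.countable_ofPred_finite_subset (monomials_countable hP)).prod
    (Set.countable_ofPred_finite_subset (multiples_countable hP))
  choose k a q haG haF using fun i : I ↦ exists_factorization_modulo_ker (π := φ.toLinearMap) hφ
    i.2.1.1 i.2.2.1 (i.2.2.2.trans multiples_subset_ker)
  let A : Set σ := ⋃ (i : I) (j : Fin (k i)), (q i (Finsupp.single j 1)).vars
  let B : Set (MvPolynomial σ R) := ⋃ i : I, (fun m ↦ m - q i (a i m)) '' i.1.1
  have hA : A.Countable := Set.countable_iUnion fun i ↦ Set.countable_iUnion fun j ↦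
    Finset.countable_toSet _
  have hB : B.Countable := Set.countable_iUnion fun i ↦ i.2.1.1.countable.image _
  have hBφ : B ⊆ RingHom.ker φ := by
    refine Set.iUnion_subset fun i ↦ ?_
    rintro _ ⟨m, hm, rfl⟩
    rw [SetLike.mem_coe, RingHom.mem_ker, map_sub, sub_eq_zero]
    exact (haF i m hm).symm
  refine ⟨P.adjoin A B hBφ, le_adjoin A B hBφ, hP.adjoin hA hB hBφ, fun F G hF hG hFP hGP ↦ ?_⟩
  let i : I := ⟨(F, G), ⟨hF, hFP⟩, ⟨hG, hGP⟩⟩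
  have hvars (j : Fin (k i)) : q i (Finsupp.single j 1) ∈ supported R (P.gens ∪ A) :=
    mem_supported.mpr fun x hx ↦ Or.inr (Set.mem_iUnion₂.mpr ⟨i, j, hx⟩)
  exact ⟨k i, a i, q i,
    apply_mem_of_forall_single_one_mem (N := (supported R (P.gens ∪ A)).toSubmodule) hvars,
    haG i, fun m hm ↦ Or.inr (Set.mem_iUnion.mpr ⟨i, m, hm, rfl⟩)⟩

variable (φ) in
/-- The index poset of the colimit presentation of the target of `φ`. -/
abbrev CountableFlat : Type _ :=
  {P : Subpresentation φ // P.IsCountable ∧ Module.Flat R P.Stage}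

theorem exists_countableFlat_ge [Module.Flat R S] (hφ : Surjective φ) (hP : P.IsCountable) :
    ∃ Q : CountableFlat φ, P ≤ Q.1 := by
  choose next le_next hnext using fun P : {P : Subpresentation φ // P.IsCountable} ↦
    have ⟨Q, hPQ, hQ, htriv⟩ := exists_isTrivializedBy hφ P.2
    (⟨⟨Q, hQ⟩, hPQ, htriv⟩ : ∃ Q : {P : Subpresentation φ // P.IsCountable},
      P ≤ Q ∧ P.1.IsTrivializedBy Q.1)
  let c (n : ℕ) := next^[n] ⟨P, hP⟩
  have hc (n : ℕ) : c (n + 1) = next (c n) := iterate_succ_apply' next n _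
  have hmono : Monotone fun n ↦ (c n).1 :=
    monotone_nat_of_le_succ fun n ↦ hc n ▸ le_next (c n)
  have hflat : Module.Flat R (iUnion fun n ↦ (c n).1).Stage :=
    flat_stage_of_isTrivializedBy_self
      (isTrivializedBy_iUnion hmono fun n ↦ hc n ▸ hnext (c n))
  exact ⟨⟨_, .iUnion fun n ↦ (c n).2, hflat⟩, le_iUnion (fun n ↦ (c n).1) 0⟩

theorem exists_countableFlat_upperBound [Module.Flat R S] (hφ : Surjective φ)
    (T : Set (CountableFlat φ)) (hT : T.Countable) : ∃ Q, ∀ P ∈ T, P ≤ Q := by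
  have : Countable T := hT
  obtain ⟨Q, hQ⟩ := exists_countableFlat_ge hφ (.iUnion fun P : T ↦ P.1.2.1)
  exact ⟨Q, fun P hP ↦ (le_iUnion (fun P : T ↦ P.1.1) ⟨P, hP⟩).trans hQ⟩

theorem exists_toTarget_eq [Module.Flat R S] (hφ : Surjective φ) (s : S) :
    ∃ (P : CountableFlat φ) (x : P.1.Stage), P.1.toTarget x = s := by
  obtain ⟨p, rfl⟩ := hφ s
  let P₀ : Subpresentation φ := ⟨p.vars, ∅, Set.empty_subset _⟩
  obtain ⟨P, hP⟩ := exists_countableFlat_ge (P := P₀) hφ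
    ⟨p.vars.countable_toSet, Set.countable_empty⟩
  have hp : p ∈ supported R P.1.gens := mem_supported.mpr (gens_mono hP)
  refine ⟨P, Ideal.Quotient.mk _ (killCompl Subtype.val_injective p), ?_⟩
  rw [toTarget_mk, rename_killCompl_of_mem_supported hp]

theorem exists_map_eq_map [Module.Flat R S] (hφ : Surjective φ) (P : CountableFlat φ)
    (x y : P.1.Stage) (hxy : P.1.toTarget x = P.1.toTarget y) :
    ∃ (Q : CountableFlat φ) (hPQ : P ≤ Q), map hPQ x = map hPQ y := by
  obtain ⟨p, rfl⟩ := Ideal.Quotient.mk_surjective x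
  obtain ⟨q, rfl⟩ := Ideal.Quotient.mk_surjective y
  have hker : {rename (↑) (p - q)} ⊆ (RingHom.ker φ : Set (MvPolynomial σ R)) := by
    rw [Set.singleton_subset_iff, SetLike.mem_coe, RingHom.mem_ker, map_sub, map_sub, sub_eq_zero]
    exact hxy
  obtain ⟨Q, hQ⟩ := exists_countableFlat_ge hφ
    (P.2.1.adjoin Set.countable_empty (Set.countable_singleton _) hker)
  have hPQ : P.1 ≤ Q.1 := (le_adjoin _ _ hker).trans hQ
  refine ⟨Q, hPQ, Ideal.Quotient.eq.mpr ?_⟩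
  rw [← map_sub]
  exact rename_inclusion_mem_ideal hPQ (rels_mono hQ (Or.inr rfl))

end Flat

end Subpresentation

/-- Every faithfully flat algebra over a commutative ring is an `ω₁`-directed colimit of
countably presented faithfully flat algebras. -/
theorem exists_omegaOneDirected_presentation_of_faithfullyFlat
    (R S : Type u) [CommRing R] [CommRing S] [Algebra R S]
    (hS : Module.FaithfullyFlat R S) :
    Nonempty (OmegaOneDirectedFFPresentation R S) := by
  let φ : MvPolynomial S R →ₐ[R] S := aeval id
  have hφ : Surjective φ := fun s ↦ ⟨X s, aeval_X id s⟩
  exact ⟨{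
    ι := Subpresentation.CountableFlat φ
    nonempty := (Subpresentation.exists_toTarget_eq hφ 0).nonempty
    countable_bddAbove := Subpresentation.exists_countableFlat_upperBound hφ
    obj := fun P ↦ P.1.Stage
    t := fun h ↦ Subpresentation.map h
    t_id := fun _ ↦ Subpresentation.map_refl
    t_comp := fun h₁₂ h₂₃ ↦ Subpresentation.map_comp_map h₁₂ h₂₃
    g := fun P ↦ P.1.toTarget
    g_comp := fun h ↦ Subpresentation.toTarget_comp_map h
    faithfullyFlat := fun P ↦
      have := P.2.2
      faithfullyFlat_of_flat_of_algHom P.1.toTarget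
    countablyPresented := fun P ↦ Subpresentation.exists_stage_presentation P.2.1
    jointly_surjective := Subpresentation.exists_toTarget_eq hφ
    eventually_eq := Subpresentation.exists_map_eq_map hφ }⟩
end

section
/- Let R be a commutative noetherian local ring with maximal ideal 𝔪, let I be an injective R-module together with an injective R-linear map R⧸𝔪 → I, and let N be an R-module that is not finitely generated. Then there exists an R-linear map g : N → ⨁_{n∈ℕ} I (the direct sum of countably many copies of I) whose range is not contained in the submodule ⨁_{n∈s} I for any finite subset s ⊆ ℕ; equivalently, g does not factor through the inclusion of any finite sub-direct-sum. -/
open DirectSum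

universe u

/-!
Since `N` is not noetherian, it contains a strictly increasing chain of submodules
`K 0 < K 1 < ⋯`. Because `I` is injective and contains the simple modules, there are maps
`f n : N → I` vanishing on `K n` but not on `K (n + 1)`. Each element of `⨆ n, K n` is killed by
all but finitely many `f n`, so together they give a map `⨆ n, K n → ⨁ n, I`, every component of
which is nonzero. It extends to `N` because direct sums of injective modules over a noetherian
ring are injective.
-/

section DirectSum

variable {R ι N : Type*} {M : ι → Type*} [Semiring R] [AddCommMonoid N] [Module R N]
  [∀ i, AddCommMonoid (M i)] [∀ i, Module R (M i)]

theorem exists_directSum_coe_eq {v : ∀ i, M i} (hv : {i | v i ≠ 0}.Finite) :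
    ∃ w : ⨁ i, M i, ⇑w = v := by
  classical
  refine ⟨DirectSum.mk M hv.toFinset fun i ↦ v i, funext fun i ↦ ?_⟩
  by_cases hi : v i = 0
  · rw [DirectSum.mk_apply_of_notMem (by simpa using hi), hi]
  · exact DirectSum.mk_apply_of_mem (by simpa using hi)

theorem exists_linearMap_directSum_apply_eq (f : ∀ i, N →ₗ[R] M i)
    (hf : ∀ x, {i | f i x ≠ 0}.Finite) :
    ∃ g : N →ₗ[R] ⨁ i, M i, ∀ x i, g x i = f i x := by
  choose g hg using fun x ↦ exists_directSum_coe_eq (hf x)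
  have hgx (x : N) (i : ι) : g x i = f i x := congrFun (hg x) i
  exact ⟨{
    toFun := g
    map_add' := fun x y ↦ DFinsupp.ext fun i ↦ by
      rw [hgx, map_add, DirectSum.add_apply, hgx, hgx]
    map_smul' := fun r x ↦ DFinsupp.ext fun i ↦ by
      rw [hgx, map_smul, RingHom.id_apply, DirectSum.smul_apply, hgx] }, hgx⟩

theorem finite_setOf_component_comp_ne_zero [Module.Finite R N] (g : N →ₗ[R] ⨁ i, M i) :
    {i | DirectSum.component R ι M i ∘ₗ g ≠ 0}.Finite := by
  obtain ⟨T, hT⟩ := Module.Finite.fg_top (R := R) (M := N)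
  refine (T.finite_toSet.biUnion fun t _ ↦ DFinsupp.finite_support (g t)).subset fun i hi ↦ ?_
  by_contra hiT
  refine hi (LinearMap.ext_on hT fun t ht ↦ ?_)
  by_contra hti
  exact hiT (Set.mem_biUnion ht hti)

theorem exists_linearMap_iSup_directSum_apply_eq {M : ℕ → Type*} [∀ n, AddCommMonoid (M n)]
    [∀ n, Module R (M n)] {K : ℕ → Submodule R N} (hK : Monotone K) (f : ∀ n, N →ₗ[R] M n)
    (hf : ∀ n, K n ≤ LinearMap.ker (f n)) :
    ∃ g : ↥(⨆ n, K n) →ₗ[R] ⨁ n, M n, ∀ x n, g x n = f n x := by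
  refine exists_linearMap_directSum_apply_eq (fun n ↦ f n ∘ₗ (⨆ n, K n).subtype) fun x ↦ ?_
  obtain ⟨m, hm⟩ := (Submodule.mem_iSup_of_directed K hK.directed_le).1 x.2
  refine (Set.finite_lt_nat m).subset fun n hn ↦ ?_
  by_contra! hmn
  exact hn (hf n (hK (not_lt.1 hmn) hm))

end DirectSum

section Baer

variable {R : Type*} [Ring R]

theorem baer_directSum [IsNoetherianRing R] {ι : Type*} {M : ι → Type*}
    [∀ i, AddCommGroup (M i)] [∀ i, Module R (M i)] (hM : ∀ i, Module.Baer R (M i)) :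
    Module.Baer R (⨁ i, M i) := by
  intro J g
  have hext (i : ι) : ∃ G : R →ₗ[R] M i, (∀ x (hx : x ∈ J), G x = g ⟨x, hx⟩ i) ∧
      (DirectSum.component R ι M i ∘ₗ g = 0 → G = 0) := by
    by_cases hi : DirectSum.component R ι M i ∘ₗ g = 0
    · exact ⟨0, fun x hx ↦ (LinearMap.congr_fun hi ⟨x, hx⟩).symm, fun _ ↦ rfl⟩
    · obtain ⟨G, hG⟩ := hM i J (DirectSum.component R ι M i ∘ₗ g)
      exact ⟨G, hG, fun h ↦ absurd h hi⟩
  choose G hGg hG0 using hext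
  obtain ⟨g', hg'⟩ := exists_linearMap_directSum_apply_eq G fun x ↦
    (finite_setOf_component_comp_ne_zero g).subset fun i hi hgi ↦ hi (by simp [hG0 i hgi])
  exact ⟨g', fun x hx ↦ DFinsupp.ext fun i ↦ (hg' x i).trans (hGg i x hx)⟩

variable {I A B N : Type*} [AddCommGroup I] [Module R I] [AddCommGroup A] [Module R A]
  [AddCommGroup B] [Module R B] [AddCommGroup N] [Module R N]

theorem exists_comp_eq_of_baer_of_ker_le_ker (hI : Module.Baer R I) {t : A →ₗ[R] B}
    {φ : A →ₗ[R] I} (h : LinearMap.ker t ≤ LinearMap.ker φ) : ∃ ψ : B →ₗ[R] I, ψ ∘ₗ t = φ := by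
  have hinj : Function.Injective ((LinearMap.ker t).liftQ t le_rfl) :=
    LinearMap.ker_eq_bot.1 (Submodule.ker_liftQ_eq_bot' _ t rfl)
  obtain ⟨ψ, hψ⟩ := hI.extension_property _ hinj ((LinearMap.ker t).liftQ φ h)
  exact ⟨ψ, LinearMap.ext fun a ↦ LinearMap.congr_fun hψ (Submodule.Quotient.mk a)⟩

theorem exists_le_ker_and_apply_ne_zero (hI : Module.Baer R I)
    (hsimple : ∀ m : Ideal R, m.IsMaximal → ∃ e : (R ⧸ m) →ₗ[R] I, Function.Injective e)
    {K : Submodule R N} {x : N} (hx : x ∉ K) :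
    ∃ f : N →ₗ[R] I, K ≤ LinearMap.ker f ∧ f x ≠ 0 := by
  let t : R →ₗ[R] N ⧸ K := LinearMap.toSpanSingleton R (N ⧸ K) (K.mkQ x)
  have ht : LinearMap.ker t ≠ ⊤ := by
    simpa only [t, Ideal.ne_top_iff_one, LinearMap.mem_ker, LinearMap.toSpanSingleton_apply,
      one_smul, Submodule.mkQ_apply, Submodule.Quotient.mk_eq_zero] using hx
  obtain ⟨m, hm, htm⟩ := Ideal.exists_le_maximal _ ht
  obtain ⟨e, he⟩ := hsimple m hm
  have hker : LinearMap.ker t ≤ LinearMap.ker (e ∘ₗ m.mkQ) := by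
    rwa [LinearMap.ker_comp_of_ker_eq_bot _ (LinearMap.ker_eq_bot.2 he), Submodule.ker_mkQ]
  obtain ⟨ψ, hψ⟩ := exists_comp_eq_of_baer_of_ker_le_ker hI hker
  refine ⟨ψ ∘ₗ K.mkQ, fun y hy ↦ by simp [(Submodule.Quotient.mk_eq_zero K).2 hy], fun h0 ↦ ?_⟩
  have he1 : e (m.mkQ 1) = 0 := calc
    e (m.mkQ 1) = ψ (t 1) := (LinearMap.congr_fun hψ 1).symm
    _ = ψ (K.mkQ x) := by rw [LinearMap.toSpanSingleton_apply, one_smul]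
    _ = 0 := h0
  exact (Ideal.ne_top_iff_one m).1 hm.ne_top
    ((Submodule.Quotient.mk_eq_zero m).1 (he (he1.trans (map_zero e).symm)))

end Baer

theorem exists_strictMono_nat_of_not_wellFoundedGT {α : Type*} [Preorder α]
    (h : ¬ WellFoundedGT α) : ∃ a : ℕ → α, StrictMono a := by
  rw [WellFoundedGT, isWellFounded_iff, RelEmbedding.wellFounded_iff_isEmpty,
    not_isEmpty_iff] at h
  obtain ⟨a⟩ := h
  exact ⟨a, fun _ _ hmn ↦ a.map_rel_iff.2 hmn⟩

theorem exists_linearMap_to_directSum_not_factoring_general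
    {R I N : Type*} [Ring R] [IsNoetherianRing R] [AddCommGroup I] [Module R I]
    [AddCommGroup N] [Module R N] (hI : Module.Baer R I)
    (hsimple : ∀ m : Ideal R, m.IsMaximal → ∃ e : (R ⧸ m) →ₗ[R] I, Function.Injective e)
    (hN : ¬ Module.Finite R N) :
    ∃ g : N →ₗ[R] ⨁ _ : ℕ, I,
      ∀ s : Finset ℕ, ¬ (∀ (x : N) (n : ℕ), n ∉ s → g x n = 0) := by
  have hNoeth : ¬ WellFoundedGT (Submodule R N) := fun h ↦
    have := isNoetherian_mk h
    hN inferInstance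
  obtain ⟨K, hK⟩ := exists_strictMono_nat_of_not_wellFoundedGT hNoeth
  choose x hxK hxK' using fun n ↦ SetLike.exists_of_lt (hK (Nat.lt_succ_self n))
  choose f hfK hfx using fun n ↦ exists_le_ker_and_apply_ne_zero hI hsimple (hxK' n)
  obtain ⟨g₀, hg₀⟩ := exists_linearMap_iSup_directSum_apply_eq hK.monotone f hfK
  obtain ⟨g, hg⟩ := (baer_directSum fun _ : ℕ ↦ hI).extension_property _
    (⨆ n, K n).injective_subtype g₀
  have hgx (n : ℕ) : g (x n) n = f n (x n) := by
    let y : ↥(⨆ n, K n) := ⟨x n, Submodule.mem_iSup_of_mem (n + 1) (hxK n)⟩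
    rw [← hg₀ y n, ← hg]
    rfl
  refine ⟨g, fun s hs ↦ ?_⟩
  obtain ⟨n, hn⟩ := Infinite.exists_notMem_finset s
  exact hfx n ((hgx n).symm.trans (hs (x n) n hn))

theorem exists_linearMap_to_directSum_not_factoring
    (R : Type u) [CommRing R] [IsNoetherianRing R] [IsLocalRing R]
    (I : Type u) [AddCommGroup I] [Module R I] [Module.Injective R I]
    (e : (R ⧸ IsLocalRing.maximalIdeal R) →ₗ[R] I) (he : Function.Injective e)
    (N : Type u) [AddCommGroup N] [Module R N] (hN : ¬ Module.Finite R N) :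
    ∃ g : N →ₗ[R] ⨁ _ : ℕ, I,
      ∀ s : Finset ℕ, ¬ (∀ (x : N) (n : ℕ), n ∉ s → g x n = 0) :=
  exists_linearMap_to_directSum_not_factoring_general (.of_injective inferInstance)
    (fun _ hm ↦ IsLocalRing.eq_maximalIdeal hm ▸ ⟨e, he⟩) hN
end

section
/- Let ι be a type and for each i ∈ ι let X_i be a profinite topological space (compact, Hausdorff, and totally disconnected). Then the Stone–Čech compactification of the disjoint union Σ_{i∈ι} X_i (the sigma type with the disjoint-union topology) is totally disconnected. (Consequently, the inclusion of profinite sets into compact Hausdorff spaces preserves coproducts.) -/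
/-!
The Stone–Čech compactification of a disjoint union of profinite spaces is totally
disconnected.  (The inclusion of profinite sets into compact Hausdorff spaces preserves
coproducts.)
-/

universe u

/-!
Write `βY` for `StoneCech Y`. Total disconnectedness of `βY` is visible on `Y`: it holds as soon as,
for every closed `Z` inside an open `U` of `βY`, some clopen subset of `Y` lies between the traces
of `Z` and `U`, because a clopen subset of `Y` is the trace of a clopen subset of `βY`. Such clopen
sets can be chosen one summand at a time: if `βXᵢ` is totally disconnected, pull `Z` and `U` back
along the extension `βXᵢ → β(Σ i, X i)`, find a clopen set between the pullbacks, and restrict it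
to `Xᵢ`. A profinite `Xᵢ` is its own Stone–Čech compactification.
-/

open Set Function

theorem subset_of_preimage_subset_of_denseRange {X Y : Type*} [TopologicalSpace Y] {f : X → Y}
    (hf : DenseRange f) {U F : Set Y} (hU : IsOpen U) (hF : IsClosed F)
    (h : f ⁻¹' U ⊆ f ⁻¹' F) : U ⊆ F :=
  calc
    U ⊆ closure (f '' (f ⁻¹' U)) := hf.subset_closure_image_preimage_of_isOpen hU
    _ ⊆ F := closure_minimal (image_subset_iff.2 h) hF

theorem exists_isClopen_sigma_between {ι : Type*} {X : ι → Type*} [∀ i, TopologicalSpace (X i)]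
    {Z U : Set (Σ i, X i)}
    (h : ∀ i, ∃ C, IsClopen C ∧ Sigma.mk i ⁻¹' Z ⊆ C ∧ C ⊆ Sigma.mk i ⁻¹' U) :
    ∃ C, IsClopen C ∧ Z ⊆ C ∧ C ⊆ U := by
  choose C hC hZC hCU using h
  refine ⟨{p | p.2 ∈ C p.1}, ⟨?_, ?_⟩, fun p hp ↦ hZC p.1 hp, fun p hp ↦ hCU p.1 hp⟩
  · exact isClosed_sigma_iff.2 fun i ↦ (hC i).isClosed
  · exact isOpen_sigma_iff.2 fun i ↦ (hC i).isOpen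

section StoneCech

variable {X : Type*} [TopologicalSpace X]

theorem exists_isClopen_stoneCechUnit_preimage_eq {S : Set X} (hS : IsClopen S) :
    ∃ T : Set (StoneCech X), IsClopen T ∧ stoneCechUnit ⁻¹' T = S := by
  have hind : Continuous S.boolIndicator := (continuous_boolIndicator_iff_isClopen S).2 hS
  refine ⟨stoneCechExtend hind ⁻¹' {true},
    (isClopen_discrete _).preimage (continuous_stoneCechExtend hind), ?_⟩
  rw [← preimage_comp, stoneCechExtend_extends, preimage_boolIndicator_true]

theorem totallySeparatedSpace_stoneCech_of_exists_isClopen_between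
    (h : ∀ Z U : Set (StoneCech X), IsClosed Z → IsOpen U → Z ⊆ U →
      ∃ C, IsClopen C ∧ stoneCechUnit ⁻¹' Z ⊆ C ∧ C ⊆ stoneCechUnit ⁻¹' U) :
    TotallySeparatedSpace (StoneCech X) := by
  rw [totallySeparatedSpace_iff_exists_isClopen]
  intro x y hxy
  obtain ⟨U, hxU, hU, V, hyV, hV, hUV⟩ := exists_open_nhds_disjoint_closure hxy
  obtain ⟨C, hC, hUC, hCV⟩ := h (closure U) (closure V)ᶜ isClosed_closure
    isClosed_closure.isOpen_compl hUV.subset_compl_right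
  obtain ⟨T, hT, rfl⟩ := exists_isClopen_stoneCechUnit_preimage_eq hC
  have hUT : U ⊆ T :=
    subset_of_preimage_subset_of_denseRange denseRange_stoneCechUnit hU hT.isClosed
      ((preimage_mono subset_closure).trans hUC)
  have hVT : V ⊆ Tᶜ :=
    subset_of_preimage_subset_of_denseRange denseRange_stoneCechUnit hV hT.compl.isClosed
      fun p hpV hpT ↦ hCV hpT (subset_closure hpV)
  exact ⟨T, hT, hUT hxU, hVT hyV⟩

theorem exists_isClopen_between_preimages [TotallyDisconnectedSpace (StoneCech X)]
    {K : Type*} [TopologicalSpace K] [CompactSpace K] [T2Space K] {f : X → K} (hf : Continuous f)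
    {Z U : Set K} (hZ : IsClosed Z) (hU : IsOpen U) (hZU : Z ⊆ U) :
    ∃ C, IsClopen C ∧ f ⁻¹' Z ⊆ C ∧ C ⊆ f ⁻¹' U := by
  have hext := continuous_stoneCechExtend hf
  obtain ⟨C, hC, hZC, hCU⟩ := exists_clopen_of_closed_subset_open (hZ.preimage hext)
    (hU.preimage hext) (preimage_mono hZU)
  rw [← stoneCechExtend_extends hf, preimage_comp, preimage_comp]
  exact ⟨stoneCechUnit ⁻¹' C, hC.preimage continuous_stoneCechUnit, preimage_mono hZC,
    preimage_mono hCU⟩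

theorem stoneCechExtend_id_injective [CompactSpace X] [T2Space X] :
    Injective (stoneCechExtend (continuous_id (X := X))) := by
  have hinv : stoneCechUnit ∘ stoneCechExtend (continuous_id (X := X)) = id :=
    stoneCech_hom_ext (continuous_stoneCechUnit.comp (continuous_stoneCechExtend _)) continuous_id
      (by rw [comp_assoc, stoneCechExtend_extends, comp_id, id_comp])
  exact LeftInverse.injective (congrFun hinv)

theorem totallyDisconnectedSpace_stoneCech_of_profinite [CompactSpace X] [T2Space X]
    [TotallyDisconnectedSpace X] : TotallyDisconnectedSpace (StoneCech X) :=
  ⟨isTotallyDisconnected_of_image (continuous_stoneCechExtend continuous_id).continuousOn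
    stoneCechExtend_id_injective (isTotallyDisconnected_of_totallyDisconnectedSpace _)⟩

end StoneCech

theorem totallyDisconnected_stoneCech_sigma_of_profinite_general
    {ι : Type*} (X : ι → Type*) [∀ i, TopologicalSpace (X i)]
    [∀ i, TotallyDisconnectedSpace (StoneCech (X i))] :
    TotallyDisconnectedSpace (StoneCech (Σ i, X i)) := by
  have : TotallySeparatedSpace (StoneCech (Σ i, X i)) :=
    totallySeparatedSpace_stoneCech_of_exists_isClopen_between fun Z U hZ hU hZU ↦
      exists_isClopen_sigma_between fun i ↦
        exists_isClopen_between_preimages (continuous_stoneCechUnit.comp continuous_sigmaMk)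
          hZ hU hZU
  infer_instance

theorem totallyDisconnected_stoneCech_sigma_of_profinite
    {ι : Type u} (X : ι → Type u) [∀ i, TopologicalSpace (X i)]
    [∀ i, CompactSpace (X i)] [∀ i, T2Space (X i)]
    [∀ i, TotallyDisconnectedSpace (X i)] :
    TotallyDisconnectedSpace (StoneCech (Σ i, X i)) := by
  have (i : ι) : TotallyDisconnectedSpace (StoneCech (X i)) :=
    totallyDisconnectedSpace_stoneCech_of_profinite
  exact totallyDisconnected_stoneCech_sigma_of_profinite_general X
end

section
/- Let ι be a type, for each i ∈ ι let X_i be a profinite topological space, and let Y = Σ_{i∈ι} X_i with the disjoint-union topology. Let f : Y → ℝ be a continuous function which is bounded, say |f(y)| ≤ C for all y ∈ Y. Then for every ε > 0 there exists a locally constant function g : Y → ℝ taking only finitely many values such that |f(y) − g(y)| ≤ ε for all y ∈ Y. -/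
universe u

/-!
Finitely many small open sets cover the totally bounded range of `f`, so their preimages form a
finite open cover `U` of the disjoint union. On each profinite summand `U` is refined by a finite
partition into clopen sets, which gives a locally constant choice of a member of `U` around each
point. The number of clopen pieces may be unbounded as the summand varies, but the choices all take
values in the same finite index set, so they glue to a function with finite range.
-/

open Set TopologicalSpace
open scoped Uniformity

section LocallyConstantSelection

variable {κ : Type*}

theorem exists_isLocallyConstant_forall_mem_of_isOpenCover {X : Type*} [TopologicalSpace X]
    [CompactSpace X] [T2Space X] [TotallyDisconnectedSpace X]
    {U : κ → Opens X} (hU : IsOpenCover U) :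
    ∃ φ : X → κ, IsLocallyConstant φ ∧ ∀ x, x ∈ U (φ x) := by
  obtain ⟨n, W, hWU, hWcover, hWdisj⟩ := hU.exists_finite_nonempty_disjoint_clopen_cover
  choose index hindex using fun j => (hWU j).2
  choose piece hpiece using fun x => mem_iUnion.1 (hWcover (mem_univ x))
  have piece_eq {x : X} {j : Fin n} (hx : x ∈ W j) : piece x = j :=
    hWdisj.eq fun h => (Clopens.coe_disjoint.2 h).le_bot ⟨hpiece x, hx⟩
  have hpiece_const : IsLocallyConstant piece :=
    (IsLocallyConstant.iff_eventually_eq piece).2 fun x =>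
      Filter.eventually_of_mem ((W (piece x)).isOpen.mem_nhds (hpiece x)) fun _ => piece_eq
  exact ⟨index ∘ piece, hpiece_const.comp index, fun x => hindex (piece x) (hpiece x)⟩

variable {ι : Type*} {X : ι → Type*} [∀ i, TopologicalSpace (X i)]

theorem isLocallyConstant_sigma_iff {g : (Σ i, X i) → κ} :
    IsLocallyConstant g ↔ ∀ i, IsLocallyConstant fun x : X i => g ⟨i, x⟩ := by
  let : TopologicalSpace κ := ⊥
  have : DiscreteTopology κ := ⟨rfl⟩
  simp only [IsLocallyConstant.iff_continuous, continuous_sigma_iff]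

variable [∀ i, CompactSpace (X i)] [∀ i, T2Space (X i)] [∀ i, TotallyDisconnectedSpace (X i)]

theorem exists_isLocallyConstant_forall_mem_of_isOpenCover_sigma
    {U : κ → Opens (Σ i, X i)} (hU : IsOpenCover U) :
    ∃ φ : (Σ i, X i) → κ, IsLocallyConstant φ ∧ ∀ y, y ∈ U (φ y) := by
  choose φ hφ hφU using fun i =>
    exists_isLocallyConstant_forall_mem_of_isOpenCover (hU.comap ⟨Sigma.mk i, continuous_sigmaMk⟩)
  exact ⟨fun y => φ y.1 y.2, isLocallyConstant_sigma_iff.2 hφ, fun y => hφU y.1 y.2⟩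

theorem exists_locallyConstant_approx_on_sigma_of_profinite_general
    {E : Type*} [UniformSpace E] {f : (Σ i, X i) → E} (hf : Continuous f)
    (hrange : TotallyBounded (range f)) {V : Set (E × E)} (hV : V ∈ 𝓤 E) :
    ∃ g : (Σ i, X i) → E, IsLocallyConstant g ∧ (range g).Finite ∧ ∀ y, (f y, g y) ∈ V := by
  obtain ⟨O, ⟨hO, hOopen⟩, hOV⟩ := uniformity_hasBasis_open.mem_iff.1 hV
  obtain ⟨centers, hfinite, hcover⟩ := hrange O hO
  have hopen (c : centers) : IsOpen {y | (f y, (c : E)) ∈ O} :=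
    hOopen.preimage (hf.prodMk continuous_const)
  have hU : IsOpenCover fun c : centers => ⟨{y | (f y, (c : E)) ∈ O}, hopen c⟩ := by
    refine IsOpenCover.of_sets hopen (eq_univ_of_forall fun y => ?_)
    obtain ⟨c, hc, hyc⟩ := mem_iUnion₂.1 (hcover (mem_range_self y))
    exact mem_iUnion.2 ⟨⟨c, hc⟩, hyc⟩
  obtain ⟨φ, hφ, hφU⟩ := exists_isLocallyConstant_forall_mem_of_isOpenCover_sigma hU
  refine ⟨fun y => φ y, hφ.comp Subtype.val, hfinite.subset ?_, fun y => hOV (hφU y)⟩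
  exact range_subset_iff.2 fun y => (φ y).2

end LocallyConstantSelection

theorem exists_locallyConstant_approx_on_sigma_of_profinite
    {ι : Type u} (X : ι → Type u) [∀ i, TopologicalSpace (X i)]
    [∀ i, CompactSpace (X i)] [∀ i, T2Space (X i)]
    [∀ i, TotallyDisconnectedSpace (X i)]
    (f : (Σ i, X i) → ℝ) (hf : Continuous f)
    (C : ℝ) (hC : ∀ y : Σ i, X i, |f y| ≤ C)
    {ε : ℝ} (hε : 0 < ε) :
    ∃ g : (Σ i, X i) → ℝ, IsLocallyConstant g ∧ (Set.range g).Finite ∧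
      ∀ y : Σ i, X i, |f y - g y| ≤ ε := by
  have hrange : TotallyBounded (range f) :=
    (totallyBounded_Icc (-C) C).subset (range_subset_iff.2 fun y => abs_le.1 (hC y))
  exact exists_locallyConstant_approx_on_sigma_of_profinite_general hf hrange
    (Metric.uniformity_basis_dist_le.mem_of_mem hε)
end

section
/- In the setting of an inverse system of compact Hausdorff spaces over a nonempty directed poset J with limit X: for every clopen subset U ⊆ X there exist j ∈ J and a clopen subset V ⊆ X_j such that U = π_j⁻¹(V). (This is the surjectivity part of the paper's proposition that the quasi-component functor Q(−) : CompHaus → ProFin commutes with cofiltered limits.) -/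
/-!
In an inverse system of compact Hausdorff spaces over a nonempty directed poset, every
clopen subset of the limit is the preimage of a clopen subset of some stage.
-/

universe u

/-!
Disjoint compact subsets of the limit already have disjoint images at some stage `j`. Applied to
`U` and its complement, this gives disjoint open sets `O₁` and `O₂` of `X j` that together cover
`π_j(X)`. By compactness they cover the image of some `X k → X j`, and the preimage of `O₁` under
this map is then clopen.
-/

theorem exists_disjoint_image_of_antitone_ker {J Y : Type*} [Preorder J] [Nonempty J]
    [IsDirectedOrder J] [TopologicalSpace Y] {X : J → Type*} [∀ j, TopologicalSpace (X j)]
    [∀ j, T2Space (X j)] {p : ∀ j, Y → X j} (hp : ∀ j, Continuous (p j))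
    (hker : Antitone fun j ↦ Setoid.ker (p j)) (hinj : ∀ x y, (∀ j, p j x = p j y) → x = y)
    {A B : Set Y} (hA : IsCompact A) (hB : IsCompact B) (hAB : Disjoint A B) :
    ∃ j, Disjoint (p j '' A) (p j '' B) := by
  let sameImage (j : J) : Set (Y × Y) := {q | p j q.1 = p j q.2}
  have sameImage_closed (j : J) : IsClosed (sameImage j) :=
    isClosed_eq ((hp j).comp continuous_fst) ((hp j).comp continuous_snd)
  have sameImage_directed : Directed (· ⊇ ·) sameImage :=
    directed_of_isDirected_le fun _ _ hjk _ hq ↦ hker hjk hq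
  have prod_inter_eq_empty : A ×ˢ B ∩ ⋂ j, sameImage j = ∅ := by
    refine Set.eq_empty_iff_forall_notMem.2 fun ⟨x, y⟩ ⟨⟨hx, hy⟩, hxy⟩ ↦ ?_
    exact hAB.ne_of_mem hx hy (hinj x y fun j ↦ Set.mem_iInter.1 hxy j)
  obtain ⟨j, hj⟩ := (hA.prod hB).elim_directed_family_closed sameImage
    sameImage_closed prod_inter_eq_empty sameImage_directed
  refine ⟨j, Set.disjoint_left.2 ?_⟩
  rintro _ ⟨x, hx, rfl⟩ ⟨y, hy, hyx⟩
  exact Set.eq_empty_iff_forall_notMem.1 hj (x, y) ⟨⟨hx, hy⟩, hyx.symm⟩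

section InverseLimit

variable {J : Type*} [Preorder J] {X : J → Type*} {f : ∀ j k : J, j ≤ k → X k → X j}

/-- The inverse limit of the transition maps `f`, as a set of families in the product. -/
def inverseLimit (f : ∀ j k : J, j ≤ k → X k → X j) : Set (∀ j, X j) :=
  {x | ∀ (j k : J) (h : j ≤ k), f j k h (x k) = x j}

/-- The families whose coordinates below `k` are the images of the `k`-th one, the other
coordinates being arbitrary. These sets decrease to the inverse limit as `k` grows. -/
def compatibleBelow (f : ∀ j k : J, j ≤ k → X k → X j) (k : J) : Set (∀ j, X j) :=
  {x | ∀ (j : J) (h : j ≤ k), f j k h (x k) = x j}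

theorem iInter_compatibleBelow : ⋂ k, compatibleBelow f k = inverseLimit f := by
  ext x
  simp only [Set.mem_iInter]
  exact forall_comm

theorem antitone_compatibleBelow
    (hcomp : ∀ (j k l : J) (hjk : j ≤ k) (hkl : k ≤ l) (x : X l),
      f j k hjk (f k l hkl x) = f j l (hjk.trans hkl) x) :
    Antitone (compatibleBelow f) := by
  intro k l hkl x hx j hjk
  rw [← hx k hkl, hcomp, hx]

theorem exists_mem_compatibleBelow [∀ j, Nonempty (X j)]
    (hcomp : ∀ (j k l : J) (hjk : j ≤ k) (hkl : k ≤ l) (x : X l),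
      f j k hjk (f k l hkl x) = f j l (hjk.trans hkl) x)
    (k : J) (z : X k) :
    ∃ x ∈ compatibleBelow f k, ∀ (j : J) (h : j ≤ k), x j = f j k h z := by
  classical
  let x (j : J) : X j := if h : j ≤ k then f j k h z else Classical.arbitrary (X j)
  have hx (j : J) (h : j ≤ k) : x j = f j k h z := dif_pos h
  refine ⟨x, fun j h ↦ ?_, hx⟩
  rw [hx k le_rfl, hx j h, hcomp]

variable [∀ j, TopologicalSpace (X j)] [∀ j, T2Space (X j)]

theorem isClosed_compatibleBelow (hcont : ∀ (j k : J) (h : j ≤ k), Continuous (f j k h)) (k : J) :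
    IsClosed (compatibleBelow f k) := by
  simp only [compatibleBelow, Set.ofPred_forall]
  exact isClosed_iInter fun j ↦ isClosed_iInter fun h ↦
    isClosed_eq ((hcont j k h).comp (continuous_apply k)) (continuous_apply j)

theorem isClosed_inverseLimit (hcont : ∀ (j k : J) (h : j ≤ k), Continuous (f j k h)) :
    IsClosed (inverseLimit f) :=
  iInter_compatibleBelow (f := f) ▸ isClosed_iInter (isClosed_compatibleBelow hcont)

variable [IsDirectedOrder J]

theorem exists_separatedNhds_image_of_disjoint [Nonempty J] {A B : Set (inverseLimit f)}
    (hA : IsCompact A) (hB : IsCompact B) (hAB : Disjoint A B) :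
    ∃ j, SeparatedNhds ((fun x : inverseLimit f ↦ x.1 j) '' A)
      ((fun x : inverseLimit f ↦ x.1 j) '' B) := by
  have proj_continuous (j : J) : Continuous fun x : inverseLimit f ↦ x.1 j :=
    (continuous_apply j).comp continuous_subtype_val
  have ker_antitone : Antitone fun j ↦ Setoid.ker fun x : inverseLimit f ↦ x.1 j := by
    intro j k hjk x y hxy
    calc
      x.1 j = f j k hjk (x.1 k) := (x.2 j k hjk).symm
      _ = f j k hjk (y.1 k) := congrArg _ hxy
      _ = y.1 j := y.2 j k hjk
  obtain ⟨j, hj⟩ := exists_disjoint_image_of_antitone_ker proj_continuous ker_antitone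
    (fun _ _ h ↦ Subtype.ext (funext h)) hA hB hAB
  exact ⟨j, .of_isCompact_isCompact (hA.image (proj_continuous j))
    (hB.image (proj_continuous j)) hj⟩

variable [∀ j, CompactSpace (X j)]

theorem exists_range_subset_of_forall_inverseLimit_mem
    (hcont : ∀ (j k : J) (h : j ≤ k), Continuous (f j k h))
    (hcomp : ∀ (j k l : J) (hjk : j ≤ k) (hkl : k ≤ l) (x : X l),
      f j k hjk (f k l hkl x) = f j l (hjk.trans hkl) x)
    {j : J} {W : Set (X j)} (hW : IsOpen W) (hlim : ∀ x ∈ inverseLimit f, x j ∈ W) :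
    ∃ (k : J) (h : j ≤ k), Set.range (f j k h) ⊆ W := by
  by_cases hne : ∀ i, Nonempty (X i)
  · have : Nonempty J := ⟨j⟩
    have avoiding_compact : IsCompact {x : ∀ i, X i | x j ∈ Wᶜ} :=
      (hW.isClosed_compl.preimage (continuous_apply j)).isCompact
    have avoiding_inter_eq_empty :
        {x : ∀ i, X i | x j ∈ Wᶜ} ∩ ⋂ k, compatibleBelow f k = ∅ := by
      rw [iInter_compatibleBelow]
      exact Set.eq_empty_iff_forall_notMem.2 fun x ⟨hxW, hx⟩ ↦ hxW (hlim x hx)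
    obtain ⟨k, hk⟩ := avoiding_compact.elim_directed_family_closed _
      (isClosed_compatibleBelow hcont) avoiding_inter_eq_empty
      (directed_of_isDirected_le (antitone_compatibleBelow hcomp))
    obtain ⟨l, hjl, hkl⟩ := exists_ge_ge j k
    refine ⟨l, hjl, ?_⟩
    rintro _ ⟨z, rfl⟩
    obtain ⟨x, hx, hxz⟩ := exists_mem_compatibleBelow hcomp l z
    by_contra hzW
    refine Set.eq_empty_iff_forall_notMem.1 hk x ⟨?_, antitone_compatibleBelow hcomp hkl hx⟩
    rwa [Set.mem_ofPred_eq, hxz j hjl]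
  · obtain ⟨i, hi⟩ := not_forall.1 hne
    obtain ⟨k, hjk, hik⟩ := exists_ge_ge j i
    refine ⟨k, hjk, ?_⟩
    rintro _ ⟨z, -⟩
    exact (hi ⟨f i k hik z⟩).elim

theorem isClopen_limit_eq_preimage_of_stage_general [Nonempty J]
    (hcont : ∀ (j k : J) (h : j ≤ k), Continuous (f j k h))
    (hcomp : ∀ (j k l : J) (hjk : j ≤ k) (hkl : k ≤ l) (x : X l),
      f j k hjk (f k l hkl x) = f j l (hjk.trans hkl) x)
    {U : Set (inverseLimit f)} (hU : IsClopen U) :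
    ∃ (j : J) (V : Set (X j)), IsClopen V ∧ U = (fun x : inverseLimit f ↦ x.1 j) ⁻¹' V := by
  have : CompactSpace (inverseLimit f) :=
    isCompact_iff_compactSpace.1 (isClosed_inverseLimit hcont).isCompact
  obtain ⟨j, O₁, O₂, hO₁, hO₂, hUO₁, hUO₂, hdisj⟩ := exists_separatedNhds_image_of_disjoint
    hU.isClosed.isCompact hU.compl.isClosed.isCompact disjoint_compl_right
  rw [Set.image_subset_iff] at hUO₁ hUO₂
  obtain ⟨k, hjk, hcover⟩ := exists_range_subset_of_forall_inverseLimit_mem hcont hcomp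
    (hO₁.union hO₂) fun x hx ↦ (em (⟨x, hx⟩ ∈ U)).imp (@hUO₁ _) (@hUO₂ _)
  refine ⟨k, f j k hjk ⁻¹' O₁, ?_, ?_⟩
  · exact isClopen_of_disjoint_cover_open (fun z _ ↦ hcover ⟨z, rfl⟩)
      (hO₁.preimage (hcont j k hjk)) (hO₂.preimage (hcont j k hjk)) (hdisj.preimage _)
  · ext x
    rw [Set.mem_preimage, Set.mem_preimage, x.2 j k hjk]
    exact ⟨@hUO₁ x, fun hx ↦ by_contra fun hxU ↦ hdisj.ne_of_mem hx (hUO₂ hxU) rfl⟩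

end InverseLimit

theorem isClopen_limit_eq_preimage_of_stage
    {J : Type u} [PartialOrder J] [Nonempty J] [IsDirected J (· ≤ ·)]
    (X : J → Type u) [∀ j, TopologicalSpace (X j)]
    [∀ j, CompactSpace (X j)] [∀ j, T2Space (X j)]
    (f : ∀ j k : J, j ≤ k → X k → X j)
    (hcont : ∀ (j k : J) (h : j ≤ k), Continuous (f j k h))
    (hid : ∀ (j : J) (x : X j), f j j le_rfl x = x)
    (hcomp : ∀ (j k l : J) (hjk : j ≤ k) (hkl : k ≤ l) (x : X l),
      f j k hjk (f k l hkl x) = f j l (hjk.trans hkl) x)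
    (U : Set {x : ∀ j, X j // ∀ (j k : J) (h : j ≤ k), f j k h (x k) = x j})
    (hU : IsClopen U) :
    ∃ (j : J) (V : Set (X j)), IsClopen V ∧
      U = (fun x : {x : ∀ j, X j // ∀ (j k : J) (h : j ≤ k), f j k h (x k) = x j} =>
            x.1 j) ⁻¹' V :=
  isClopen_limit_eq_preimage_of_stage_general hcont hcomp hU
end

section
/- In the setting of an inverse system of compact Hausdorff spaces over a nonempty directed poset J with limit X: the set ⋃_{j∈J} { h ∘ π_j : h : X_j → ℝ continuous } is dense in the space C(X, ℝ) of continuous real-valued functions on X, equipped with the supremum-norm topology. (This is the Stone–Weierstrass step in the paper's proof that the functor C(−;ℝ) : CompHausᵒᵖ → Ban₁ commutes with filtered colimits.) -/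
/-!
Stone–Weierstrass step: for an inverse system of compact Hausdorff spaces over a nonempty
directed poset with limit `X`, the functions pulled back from the stages are dense in
`C(X, ℝ)` for the supremum norm: every continuous `g : X → ℝ` is uniformly `ε`-approximated
by some `h ∘ π_j` with `h : C(X_j, ℝ)`.
-/

universe u

section Cone

variable {J Y : Type*} {X : J → Type*} [TopologicalSpace Y] [∀ j, TopologicalSpace (X j)]

lemma monotone_range_compRightAlgHom {R A : Type*} [CommSemiring R] [TopologicalSpace A]
    [Semiring A] [IsTopologicalSemiring A] [Algebra R A] [Preorder J] {p : ∀ j, C(Y, X j)}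
    (hp : ∀ ⦃j k⦄, j ≤ k → ∃ f : C(X k, X j), f.comp (p k) = p j) :
    Monotone fun j => (ContinuousMap.compRightAlgHom R A (p j)).range := by
  intro j k hjk
  obtain ⟨f, hf⟩ := hp hjk
  simp only [← hf]
  exact AlgHom.range_comp_le_range
    (ContinuousMap.compRightAlgHom R A f) (ContinuousMap.compRightAlgHom R A (p k))

lemma separatesPoints_iSup_range_compRightAlgHom [∀ j, T35Space (X j)] {p : ∀ j, C(Y, X j)}
    (hinj : Function.Injective fun y j => p j y) :
    (⨆ j, (ContinuousMap.compRightAlgHom ℝ ℝ (p j)).range).SeparatesPoints := by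
  intro x y hxy
  obtain ⟨j, hj⟩ : ∃ j, p j x ≠ p j y := Function.ne_iff.mp (hinj.ne hxy)
  obtain ⟨h, hcont, hne⟩ := separatesPoints_continuous_of_t35Space hj
  let h' : C(X j, ℝ) := ⟨h, hcont⟩
  have hmem : h'.comp (p j) ∈ ⨆ j, (ContinuousMap.compRightAlgHom ℝ ℝ (p j)).range :=
    le_iSup (fun j => (ContinuousMap.compRightAlgHom ℝ ℝ (p j)).range) j ⟨h', rfl⟩
  exact ⟨h'.comp (p j), ⟨h'.comp (p j), hmem, rfl⟩, hne⟩

variable [Preorder J] [Nonempty J] [IsDirectedOrder J] [CompactSpace Y] [∀ j, T35Space (X j)]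
  {p : ∀ j, C(Y, X j)}

theorem dense_iUnion_range_comp
    (hp : ∀ ⦃j k⦄, j ≤ k → ∃ f : C(X k, X j), f.comp (p k) = p j)
    (hinj : Function.Injective fun y j => p j y) :
    Dense (⋃ j, Set.range fun h : C(X j, ℝ) => h.comp (p j)) := by
  let A (j : J) : Subalgebra ℝ C(Y, ℝ) := (ContinuousMap.compRightAlgHom ℝ ℝ (p j)).range
  have hA : ((⨆ j, A j : Subalgebra ℝ C(Y, ℝ)) : Set C(Y, ℝ)) =
      ⋃ j, Set.range fun h : C(X j, ℝ) => h.comp (p j) :=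
    Subalgebra.coe_iSup_of_directed (monotone_range_compRightAlgHom hp).directed_le
  rw [← hA]
  exact ContinuousMap.continuousMap_mem_subalgebra_closure_of_separatesPoints _
    (separatesPoints_iSup_range_compRightAlgHom hinj)

theorem dense_pullbacks_in_continuousFunctions_on_limit_general
    (hp : ∀ ⦃j k⦄, j ≤ k → ∃ f : C(X k, X j), f.comp (p k) = p j)
    (hinj : Function.Injective fun y j => p j y) (g : C(Y, ℝ)) {ε : ℝ} (hε : 0 < ε) :
    ∃ (j : J) (h : C(X j, ℝ)), ∀ y, |g y - h (p j y)| ≤ ε := by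
  obtain ⟨u, hu, hgu⟩ := (dense_iUnion_range_comp hp hinj).exists_dist_lt g hε
  obtain ⟨j, h, rfl⟩ := Set.mem_iUnion.mp hu
  exact ⟨j, h, (ContinuousMap.dist_le hε.le).mp hgu.le⟩

end Cone

section InverseLimit

variable {J : Type*} [LE J] {X : J → Type*} [∀ j, TopologicalSpace (X j)] [∀ j, T2Space (X j)]
  {f : ∀ j k : J, j ≤ k → X k → X j}

lemma isClosed_setOf_compatible (hf : ∀ j k h, Continuous (f j k h)) :
    IsClosed {x : ∀ j, X j | ∀ (j k : J) (h : j ≤ k), f j k h (x k) = x j} := by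
  simp only [Set.ofPred_forall]
  exact isClosed_iInter fun j => isClosed_iInter fun k => isClosed_iInter fun h =>
    isClosed_eq ((hf j k h).comp (continuous_apply k)) (continuous_apply j)

lemma compactSpace_subtype_compatible [∀ j, CompactSpace (X j)]
    (hf : ∀ j k h, Continuous (f j k h)) :
    CompactSpace {x : ∀ j, X j // ∀ (j k : J) (h : j ≤ k), f j k h (x k) = x j} :=
  isCompact_iff_compactSpace.mp (isClosed_setOf_compatible hf).isCompact

end InverseLimit

theorem dense_pullbacks_in_continuousFunctions_on_limit
    {J : Type u} [PartialOrder J] [Nonempty J] [IsDirected J (· ≤ ·)]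
    (X : J → Type u) [∀ j, TopologicalSpace (X j)]
    [∀ j, CompactSpace (X j)] [∀ j, T2Space (X j)]
    (f : ∀ j k : J, j ≤ k → X k → X j)
    (hcont : ∀ (j k : J) (h : j ≤ k), Continuous (f j k h))
    (hid : ∀ (j : J) (x : X j), f j j le_rfl x = x)
    (hcomp : ∀ (j k l : J) (hjk : j ≤ k) (hkl : k ≤ l) (x : X l),
      f j k hjk (f k l hkl x) = f j l (hjk.trans hkl) x)
    (g : C({x : ∀ j, X j // ∀ (j k : J) (h : j ≤ k), f j k h (x k) = x j}, ℝ))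
    (ε : ℝ) (hε : 0 < ε) :
    ∃ (j : J) (h : C(X j, ℝ)),
      ∀ x : {x : ∀ j, X j // ∀ (j k : J) (h : j ≤ k), f j k h (x k) = x j},
        |g x - h (x.1 j)| ≤ ε := by
  have := compactSpace_subtype_compatible hcont
  exact dense_pullbacks_in_continuousFunctions_on_limit_general
    (p := fun j => ⟨fun x => x.1 j, (continuous_apply j).comp continuous_subtype_val⟩)
    (fun j k hjk => ⟨⟨f j k hjk, hcont j k hjk⟩, ContinuousMap.ext fun x => x.2 j k hjk⟩)
    Subtype.val_injective g hε
end

section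
/- Let X be a compact metrizable topological space, and let Q = (ℕ → [0,1]) denote the Hilbert cube with the product topology. Then there exist continuous maps f, g : Q → Q and a topological embedding e : X → Q (a homeomorphism onto its image) such that range(e) = { q ∈ Q : f(q) = g(q) }. (Every compact metrizable space is an equalizer of two self-maps of the Hilbert cube; this is the key step in the paper's proof that the unit interval generates CompHausᵒᵖ under colimits.) -/
/-!
Every compact metrizable space is an equalizer of two continuous self-maps of the Hilbert
cube: there are continuous `f g : Q → Q` (where `Q = ℕ → [0,1]`) and an embedding
`e : X → Q` with `range e = {q | f q = g q}`.
-/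

section PerfectlyNormal

variable {Y : Type*} [TopologicalSpace Y] [PerfectlyNormalSpace Y] {s : Set Y}

theorem exists_continuousMap_unitInterval_eq_preimage_zero (hs : IsClosed s) :
    ∃ u : C(Y, unitInterval), s = u ⁻¹' {0} := by
  obtain ⟨u, hsu, hu⟩ := perfectlyNormalSpace_iff_forall_isClosed_preimage_zero.mp ‹_› s hs
  refine ⟨⟨fun y ↦ ⟨u y, hu y⟩, by fun_prop⟩, ?_⟩
  ext y
  simp [hsu, Subtype.ext_iff]

theorem exists_continuous_pi_unitInterval_eq_eqLocus (ι : Type*) [Nonempty ι]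
    (hs : IsClosed s) :
    ∃ f g : Y → ι → unitInterval, Continuous f ∧ Continuous g ∧ s = {y | f y = g y} := by
  obtain ⟨u, rfl⟩ := exists_continuousMap_unitInterval_eq_preimage_zero hs
  refine ⟨fun y _ ↦ u y, fun _ _ ↦ 0, by fun_prop, continuous_const, ?_⟩
  ext y
  exact Function.const_inj.symm

end PerfectlyNormal

theorem exists_isEmbedding_hilbertCube (X : Type*) [TopologicalSpace X]
    [TopologicalSpace.MetrizableSpace X] [TopologicalSpace.SeparableSpace X] :
    ∃ e : X → ℕ → unitInterval, Topology.IsEmbedding e := by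
  let _ := TopologicalSpace.metrizableSpaceMetric X
  exact Metric.PiNatEmbed.exists_embedding_to_hilbert_cube

theorem compact_metrizable_is_equalizer_in_hilbert_cube_general
    (X : Type*) [TopologicalSpace X] [CompactSpace X]
    [TopologicalSpace.MetrizableSpace X] :
    ∃ (f g : (ℕ → unitInterval) → (ℕ → unitInterval)) (e : X → (ℕ → unitInterval)),
      Continuous f ∧ Continuous g ∧ Topology.IsEmbedding e ∧
      Set.range e = {q : ℕ → unitInterval | f q = g q} := by
  have : TopologicalSpace.SeparableSpace X :=
    let _ := TopologicalSpace.metrizableSpaceMetric X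
    inferInstance
  obtain ⟨e, he⟩ := exists_isEmbedding_hilbertCube X
  have isClosed_range : IsClosed (Set.range e) := (isCompact_range he.continuous).isClosed
  obtain ⟨f, g, hf, hg, range_eq⟩ :=
    exists_continuous_pi_unitInterval_eq_eqLocus ℕ isClosed_range
  exact ⟨f, g, e, hf, hg, he, range_eq⟩

theorem compact_metrizable_is_equalizer_in_hilbert_cube
    (X : Type) [TopologicalSpace X] [CompactSpace X]
    [TopologicalSpace.MetrizableSpace X] :
    ∃ (f g : (ℕ → unitInterval) → (ℕ → unitInterval)) (e : X → (ℕ → unitInterval)),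
      Continuous f ∧ Continuous g ∧ Topology.IsEmbedding e ∧
      Set.range e = {q : ℕ → unitInterval | f q = g q} :=
  compact_metrizable_is_equalizer_in_hilbert_cube_general X
end

section
/- Let I be a nonempty directed partial order and let F be a functor from ℕᵒᵖ × I to types, i.e., sets F(n,i) together with maps σ : F(n+1,i) → F(n,i) and, for i ≤ j, maps τ : F(n,i) → F(n,j), commuting and functorial in both variables. Let Φ be the set of monotone maps φ : ℕ → I, partially ordered pointwise (Φ is directed). For φ ∈ Φ let L(φ) be the limit of F(n, φ(m)) over the poset {(n,m) ∈ ℕ × ℕ : n ≤ m}, ordered by (n,m) ≤ (n',m') iff n' ≤ n and m ≤ m'; concretely L(φ) is the set of families (x_{n,m})_{n≤m} with x_{n,m} ∈ F(n, φ(m)) compatible with all the structure maps, and for φ ≤ ψ the maps τ induce a map L(φ) → L(ψ). Then the assignment sending (x_{n,m})_{n≤m} ∈ L(φ) to the family ([x_{n,n}])_{n∈ℕ} induces a well-defined map colim_{φ∈Φ} L(φ) → lim_{n∈ℕᵒᵖ} colim_{i∈I} F(n,i), and this map is a bijection. (In the category of types, sequential limits of filtered colimits are computed as a filtered colimit of limits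 over monotone reindexings.) -/
/-!
In the category of types, sequential limits of filtered colimits are computed as a filtered
colimit, over monotone reindexings `φ : ℕ → I`, of limits over `{(n, m) : n ≤ m}`.
-/

universe u

namespace Stmt14

variable {I : Type u} [PartialOrder I]

section Defs

variable (F : ℕ → I → Type u)
  (σ : ∀ (n : ℕ) (i : I), F (n + 1) i → F n i)
  (τ : ∀ (i j : I), i ≤ j → ∀ n : ℕ, F n i → F n j)

/-- The directed colimit `colim_{i ∈ I} F n i`: the quotient of `Σ i, F n i` identifying
`x ∈ F n i` with `τ x ∈ F n j` for `i ≤ j`. -/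
def ColimObj (n : ℕ) : Type u :=
  Quot (fun x y : Σ i : I, F n i => ∃ h : x.1 ≤ y.1, τ x.1 y.1 h n x.2 = y.2)

/-- For a monotone `φ : ℕ → I`, the limit `L(φ)` of `F n (φ m)` over the poset
`{(n, m) : n ≤ m}`: compatible families `(x_{n,m})_{n ≤ m}`. -/
def LimObj (φ : ℕ → I) (hφ : Monotone φ) : Type u :=
  { x : ∀ n m : ℕ, n ≤ m → F n (φ m) //
      (∀ (n m : ℕ) (h : n + 1 ≤ m),
          σ n (φ m) (x (n + 1) m h) = x n m (Nat.le_of_succ_le h)) ∧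
      (∀ (n m m' : ℕ) (h : n ≤ m) (h' : m ≤ m'),
          τ (φ m) (φ m') (hφ h') n (x n m h) = x n m' (h.trans h')) }

variable (hcomm : ∀ (i j : I) (hij : i ≤ j) (n : ℕ) (x : F (n + 1) i),
    τ i j hij n (σ n i x) = σ n j (τ i j hij (n + 1) x))

/-- The map `colim_i F (n+1) i → colim_i F n i` induced by `σ`. -/
def colimSucc (n : ℕ) : ColimObj F τ (n + 1) → ColimObj F τ n :=
  Quot.lift (fun x => Quot.mk _ ⟨x.1, σ n x.1 x.2⟩)
    (by
      rintro ⟨i, x⟩ ⟨j, y⟩ ⟨h, hxy⟩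
      apply Quot.sound
      refine ⟨h, ?_⟩
      dsimp only at hxy ⊢
      rw [hcomm, hxy])

/-- The sequential limit `lim_{n ∈ ℕᵒᵖ} colim_{i ∈ I} F n i`. -/
def LimColim : Type u :=
  { a : ∀ n : ℕ, ColimObj F τ n // ∀ n : ℕ, colimSucc F σ τ hcomm n (a (n + 1)) = a n }

/-- The filtered colimit `colim_{φ ∈ Φ} L(φ)` over the poset `Φ` of monotone maps
`ℕ → I`, ordered pointwise. -/
def ColimLim : Type u :=
  Quot (fun a b : Σ φ : { φ : ℕ → I // Monotone φ }, LimObj F σ τ φ.1 φ.2 =>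
    ∃ h : ∀ n : ℕ, a.1.1 n ≤ b.1.1 n,
      ∀ (n m : ℕ) (hm : n ≤ m),
        τ (a.1.1 m) (b.1.1 m) (h m) n (a.2.1 n m hm) = b.2.1 n m hm)

/-- The canonical comparison map, sending the class of `(x_{n,m})_{n ≤ m} ∈ L(φ)` to the
family `([x_{n,n}])_{n ∈ ℕ}`. -/
def canonical : ColimLim F σ τ → LimColim F σ τ hcomm :=
  Quot.lift
    (fun a =>
      ⟨fun n => Quot.mk _ ⟨a.1.1 n, a.2.1 n n le_rfl⟩, by
        intro n
        show Quot.mk _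
            (⟨a.1.1 (n + 1), σ n (a.1.1 (n + 1)) (a.2.1 (n + 1) (n + 1) le_rfl)⟩ :
              Σ i : I, F n i) =
          Quot.mk _ (⟨a.1.1 n, a.2.1 n n le_rfl⟩ : Σ i : I, F n i)
        rw [a.2.2.1 n (n + 1) (le_refl (n + 1))]
        exact (Quot.sound
          ⟨a.1.2 (Nat.le_succ n), a.2.2.2 n n (n + 1) le_rfl (Nat.le_succ n)⟩).symm⟩)
    (by
      rintro a b ⟨h, hab⟩
      apply Subtype.ext
      funext n
      exact Quot.sound ⟨h n, hab n n le_rfl⟩)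

end Defs

end Stmt14

/-!
A family in `L(φ)` is determined by its diagonal, since `x n m` is the image of `x m m` under the
maps `σ`. For injectivity, equality of the classes of two diagonals is witnessed at each `n` by some
index `k n`, so the two families agree in `L(χ)` for any monotone `χ ≥ k`. For surjectivity, the
compatibility of chosen representatives of levels `n` and `n + 1` is witnessed by some `k n`, and
pushing the representatives to a monotone `φ ≥ k` yields an element of `L(φ)`.
-/

namespace Stmt14

section DirectedOrder

variable {α : Type*} [Preorder α] [IsDirectedOrder α]

theorem exists_monotone_ge (g : ℕ → α) : ∃ φ : ℕ → α, Monotone φ ∧ ∀ n, g n ≤ φ n := by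
  choose ub le_ub_left le_ub_right using exists_ge_ge (α := α)
  let φ : ℕ → α := Nat.rec (g 0) fun n a => ub a (g (n + 1))
  refine ⟨φ, monotone_nat_of_le_succ fun n => le_ub_left _ _, fun n => ?_⟩
  cases n with
  | zero => exact le_rfl
  | succ n => exact le_ub_right _ _

theorem exists_monotone_ge_ge (f g : ℕ → α) :
    ∃ χ : { φ : ℕ → α // Monotone φ }, (∀ n, f n ≤ χ.1 n) ∧ ∀ n, g n ≤ χ.1 n := by
  choose ub hf hg using fun n => exists_ge_ge (f n) (g n)
  obtain ⟨χ, hχ, hub⟩ := exists_monotone_ge ub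
  exact ⟨⟨χ, hχ⟩, fun n => (hf n).trans (hub n), fun n => (hg n).trans (hub n)⟩

/-- The relation on `Σ i, G i` identifying two elements whose images agree at some later index.
It is a plain-function counterpart of `DirectLimit.setoid`, whose transition maps are `FunLike`. -/
def eventualEqSetoid {G : α → Type*} (f : ∀ i j, i ≤ j → G i → G j)
    (hf : ∀ i j k (hij : i ≤ j) (hjk : j ≤ k) (x : G i),
      f j k hjk (f i j hij x) = f i k (hij.trans hjk) x) : Setoid (Σ i, G i) where
  r x y := ∃ (k : α) (hx : x.1 ≤ k) (hy : y.1 ≤ k), f x.1 k hx x.2 = f y.1 k hy y.2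
  iseqv :=
    { refl := fun x => ⟨x.1, le_rfl, le_rfl, rfl⟩
      symm := fun ⟨k, hx, hy, hxy⟩ => ⟨k, hy, hx, hxy.symm⟩
      trans := by
        rintro x y z ⟨k, hx, hy, hxy⟩ ⟨l, hy', hz, hyz⟩
        obtain ⟨m, hk, hl⟩ := exists_ge_ge k l
        refine ⟨m, hx.trans hk, hz.trans hl, ?_⟩
        calc f x.1 m _ x.2 = f k m hk (f x.1 k hx x.2) := (hf ..).symm
          _ = f k m hk (f y.1 k hy y.2) := by rw [hxy]
          _ = f l m hl (f y.1 l hy' y.2) := by rw [hf, hf]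
          _ = f l m hl (f z.1 l hz z.2) := by rw [hyz]
          _ = f z.1 m _ z.2 := hf .. }

theorem exists_map_eq_of_quot_mk_eq {G : α → Type*} (f : ∀ i j, i ≤ j → G i → G j)
    (hf : ∀ i j k (hij : i ≤ j) (hjk : j ≤ k) (x : G i),
      f j k hjk (f i j hij x) = f i k (hij.trans hjk) x) {x y : Σ i, G i}
    (hxy : Quot.mk (fun x y : Σ i, G i => ∃ h : x.1 ≤ y.1, f x.1 y.1 h x.2 = y.2) x =
      Quot.mk _ y) :
    ∃ (k : α) (hx : x.1 ≤ k) (hy : y.1 ≤ k), f x.1 k hx x.2 = f y.1 k hy y.2 := by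
  have rel_le : ∀ x y : Σ i, G i, (∃ h : x.1 ≤ y.1, f x.1 y.1 h x.2 = y.2) →
      eventualEqSetoid f hf x y := by
    rintro x y ⟨hle, hmap⟩
    exact ⟨y.1, hle, le_rfl, by rw [← hmap, hf]⟩
  exact Setoid.eqvGen_le rel_le (Quot.eqvGen_exact hxy)

end DirectedOrder

variable {I : Type u} [PartialOrder I] {F : ℕ → I → Type u}
  {σ : ∀ (n : ℕ) (i : I), F (n + 1) i → F n i}
  {τ : ∀ (i j : I), i ≤ j → ∀ n : ℕ, F n i → F n j}
  (hcomm : ∀ (i j : I) (hij : i ≤ j) (n : ℕ) (x : F (n + 1) i),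
    τ i j hij n (σ n i x) = σ n j (τ i j hij (n + 1) x))

namespace ColimObj

variable (τ) in
/-- The class `[x]` in `colim_i F n i` of an element `x` of `F n i`. -/
def mk {n : ℕ} {i : I} (x : F n i) : ColimObj F τ n :=
  Quot.mk _ ⟨i, x⟩

theorem mk_map {n : ℕ} {i j : I} (hij : i ≤ j) (x : F n i) : mk τ (τ i j hij n x) = mk τ x :=
  (Quot.sound ⟨hij, rfl⟩).symm

theorem exists_mk_eq {n : ℕ} (a : ColimObj F τ n) : ∃ (i : I) (x : F n i), mk τ x = a :=
  let ⟨⟨i, x⟩, hx⟩ := Quot.exists_rep a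
  ⟨i, x, hx⟩

theorem exists_map_eq_of_mk_eq [IsDirectedOrder I]
    (hτ_comp : ∀ (i j k : I) (hij : i ≤ j) (hjk : j ≤ k) (n : ℕ) (x : F n i),
      τ j k hjk n (τ i j hij n x) = τ i k (hij.trans hjk) n x)
    {n : ℕ} {i j : I} {x : F n i} {y : F n j} (hxy : mk τ x = mk τ y) :
    ∃ (k : I) (hi : i ≤ k) (hj : j ≤ k), τ i k hi n x = τ j k hj n y :=
  exists_map_eq_of_quot_mk_eq (fun i j hij => τ i j hij n)
    (fun i j k hij hjk => hτ_comp i j k hij hjk n) hxy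

end ColimObj

section Reindexing

variable
  (hτ_comp : ∀ (i j k : I) (hij : i ≤ j) (hjk : j ≤ k) (n : ℕ) (x : F n i),
    τ j k hjk n (τ i j hij n x) = τ i k (hij.trans hjk) n x)
  {φ ψ : ℕ → I} {hφ : Monotone φ} {hψ : Monotone ψ}

namespace LimObj

theorem ext_diag {x y : LimObj F σ τ φ hφ} (hxy : ∀ n, x.1 n n le_rfl = y.1 n n le_rfl) :
    x = y := by
  refine Subtype.ext (funext₃ fun n m hnm => ?_)
  induction hnm using Nat.decreasingInduction with
  | self => exact hxy m
  | of_succ n hnm ih => rw [← x.2.1 n m hnm, ← y.2.1 n m hnm, ih]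

/-- The map `L(φ) → L(ψ)` induced by `τ` for `φ ≤ ψ`. -/
def map (hφψ : ∀ n, φ n ≤ ψ n) (x : LimObj F σ τ φ hφ) : LimObj F σ τ ψ hψ :=
  ⟨fun n m hnm => τ (φ m) (ψ m) (hφψ m) n (x.1 n m hnm),
    fun n m hnm => by rw [← hcomm, x.2.1],
    fun n m m' hnm hmm' => by simp only [← x.2.2 n m m' hnm hmm', hτ_comp]⟩

/-- The element of `L(φ)` obtained by pushing forward along `τ` a sequence of elements
`x n` of `F n (i n)` with `i ≤ φ`, whose compatibility with `σ` need only hold after mapping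
to the index `φ (n + 1)`. -/
def ofSeq (hφ : Monotone φ) {i : ℕ → I} (x : ∀ n, F n (i n)) (hi : ∀ n, i n ≤ φ n)
    (hx : ∀ n, τ (i (n + 1)) (φ (n + 1)) (hi (n + 1)) n (σ n _ (x (n + 1))) =
      τ (i n) (φ (n + 1)) ((hi n).trans (hφ n.le_succ)) n (x n)) :
    LimObj F σ τ φ hφ :=
  ⟨fun n m hnm => τ (i n) (φ m) ((hi n).trans (hφ hnm)) n (x n),
    fun n m hnm => by rw [← hcomm, ← hτ_comp _ _ _ (hi (n + 1)) (hφ hnm), hx, hτ_comp],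
    fun n _ _ _ _ => hτ_comp _ _ _ _ _ n (x n)⟩

end LimObj

namespace ColimLim

/-- The class in `colim_φ L(φ)` of an element of `L(φ)`. -/
def mk (x : LimObj F σ τ φ hφ) : ColimLim F σ τ :=
  Quot.mk _ ⟨⟨φ, hφ⟩, x⟩

theorem mk_map (hφψ : ∀ n, φ n ≤ ψ n) (x : LimObj F σ τ φ hφ) :
    mk (x.map hcomm hτ_comp hφψ : LimObj F σ τ ψ hψ) = mk x :=
  (Quot.sound ⟨hφψ, fun _ _ _ => rfl⟩).symm

end ColimLim

theorem canonical_mk_apply (x : LimObj F σ τ φ hφ) (n : ℕ) :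
    (canonical F σ τ hcomm (ColimLim.mk x)).1 n = ColimObj.mk τ (x.1 n n le_rfl) :=
  rfl

end Reindexing

theorem canonical_injective [IsDirectedOrder I]
    (hτ_comp : ∀ (i j k : I) (hij : i ≤ j) (hjk : j ≤ k) (n : ℕ) (x : F n i),
      τ j k hjk n (τ i j hij n x) = τ i k (hij.trans hjk) n x) :
    Function.Injective (canonical F σ τ hcomm) := by
  rintro ⟨⟨φ, hφ⟩, x⟩ ⟨⟨ψ, hψ⟩, y⟩ hxy
  change ColimLim.mk x = ColimLim.mk y
  have diag_class_eq (n : ℕ) :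
      ColimObj.mk τ (x.1 n n le_rfl) = ColimObj.mk τ (y.1 n n le_rfl) :=
    congrFun (congrArg Subtype.val hxy) n
  choose k hφk hψk diag_eq using fun n =>
    ColimObj.exists_map_eq_of_mk_eq hτ_comp (diag_class_eq n)
  obtain ⟨χ, hχ, hkχ⟩ := exists_monotone_ge k
  have hφχ (n : ℕ) : φ n ≤ χ n := (hφk n).trans (hkχ n)
  have hψχ (n : ℕ) : ψ n ≤ χ n := (hψk n).trans (hkχ n)
  have map_eq : (x.map hcomm hτ_comp hφχ : LimObj F σ τ χ hχ) = y.map hcomm hτ_comp hψχ :=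
    LimObj.ext_diag fun n => by
      change τ _ _ (hφχ n) n _ = τ _ _ (hψχ n) n _
      rw [← hτ_comp _ _ _ (hφk n) (hkχ n), diag_eq, hτ_comp]
  calc ColimLim.mk x = ColimLim.mk (x.map hcomm hτ_comp hφχ : LimObj F σ τ χ hχ) :=
        (ColimLim.mk_map hcomm hτ_comp hφχ x).symm
    _ = ColimLim.mk (y.map hcomm hτ_comp hψχ : LimObj F σ τ χ hχ) := by rw [map_eq]
    _ = ColimLim.mk y := ColimLim.mk_map hcomm hτ_comp hψχ y

theorem canonical_surjective [IsDirectedOrder I]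
    (hτ_comp : ∀ (i j k : I) (hij : i ≤ j) (hjk : j ≤ k) (n : ℕ) (x : F n i),
      τ j k hjk n (τ i j hij n x) = τ i k (hij.trans hjk) n x) :
    Function.Surjective (canonical F σ τ hcomm) := by
  rintro ⟨a, ha⟩
  choose i x hx using fun n => (a n).exists_mk_eq
  have succ_class_eq (n : ℕ) : ColimObj.mk τ (σ n _ (x (n + 1))) = ColimObj.mk τ (x n) := by
    rw [hx n, ← ha n, ← hx (n + 1)]
    rfl
  choose k hsucc hik succ_eq using fun n =>
    ColimObj.exists_map_eq_of_mk_eq hτ_comp (succ_class_eq n)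
  obtain ⟨φ, hφ, hkφ⟩ := exists_monotone_ge k
  have hiφ (n : ℕ) : i n ≤ φ n := (hik n).trans (hkφ n)
  let z : LimObj F σ τ φ hφ := LimObj.ofSeq hcomm hτ_comp hφ x hiφ fun n => by
    rw [← hτ_comp _ _ _ (hsucc n) ((hkφ n).trans (hφ n.le_succ)), succ_eq, hτ_comp]
  refine ⟨ColimLim.mk z, Subtype.ext (funext fun n => ?_)⟩
  calc (canonical F σ τ hcomm (ColimLim.mk z)).1 n
      = ColimObj.mk τ (τ _ _ (hiφ n) n (x n)) := canonical_mk_apply hcomm z n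
    _ = ColimObj.mk τ (x n) := ColimObj.mk_map (hiφ n) (x n)
    _ = a n := hx n

end Stmt14

open Stmt14 in
/-- Sequential limits of filtered colimits of types are filtered colimits of limits over
monotone reindexings: the poset of monotone maps `ℕ → I` (ordered pointwise) is directed,
and the canonical map `colim_{φ} L(φ) → lim_n colim_i F n i` is a bijection. -/
theorem sequentialLim_of_filteredColim_of_types
    {I : Type u} [PartialOrder I] [Nonempty I] [IsDirected I (· ≤ ·)]
    (F : ℕ → I → Type u)
    (σ : ∀ (n : ℕ) (i : I), F (n + 1) i → F n i)
    (τ : ∀ (i j : I), i ≤ j → ∀ n : ℕ, F n i → F n j)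
    (hτ_id : ∀ (i : I) (n : ℕ) (x : F n i), τ i i le_rfl n x = x)
    (hτ_comp : ∀ (i j k : I) (hij : i ≤ j) (hjk : j ≤ k) (n : ℕ) (x : F n i),
      τ j k hjk n (τ i j hij n x) = τ i k (hij.trans hjk) n x)
    (hcomm : ∀ (i j : I) (hij : i ≤ j) (n : ℕ) (x : F (n + 1) i),
      τ i j hij n (σ n i x) = σ n j (τ i j hij (n + 1) x)) :
    (∀ φ ψ : { φ : ℕ → I // Monotone φ }, ∃ χ : { φ : ℕ → I // Monotone φ },
      (∀ n : ℕ, φ.1 n ≤ χ.1 n) ∧ (∀ n : ℕ, ψ.1 n ≤ χ.1 n)) ∧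
    Function.Bijective (canonical F σ τ hcomm) := by
  exact ⟨fun φ ψ => exists_monotone_ge_ge φ.1 ψ.1,
    canonical_injective hcomm hτ_comp, canonical_surjective hcomm hτ_comp⟩
end

section
/- Let R be a commutative ring. Call a quasi-ideal a pair (I, α) where I is an R-module and α : I → R is an R-linear map satisfying α(x)•y = α(y)•x for all x, y ∈ I; call (I, α) idempotent if the R-linear map μ : I ⊗[R] I → I determined by μ(x ⊗ y) = α(x)•y is bijective. Then: (1) if J ⊆ R is an ideal with J·J = J such that the R-module J ⊗[R] J is flat, then the pair (J ⊗[R] J, m), where m : J ⊗[R] J → R is determined by m(a ⊗ b) = a·b, is an idempotent quasi-ideal, its underlying module J ⊗[R] J is flat, and the range of m equals J; (2) conversely, if (I, α) is an idempotent quasi-ideal such that I is a flat R-module, then the ideal J := range(α) satisfies J·J = J, and there is an R-module isomorphism φ : J ⊗[R] J → I with α ∘ φ = m (in particular, J ⊗[R] J is flat). Thus (I, α) ↦ range(α) and J ↦ (J ⊗[R] J, m) are mutually inverse correspondences between isomorphism classes of idempotent quasi-ideals with flat underlying module and ideals J with J·J = J and J ⊗[R] J flat. -/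
/-!
Idempotent quasi-ideals with flat underlying module over a commutative ring `R` correspond
to ideals `J` with `J·J = J` and `J ⊗[R] J` flat.
-/

open scoped TensorProduct

universe u

namespace Stmt16

variable (R : Type u) [CommRing R]

/-- A quasi-ideal is an `R`-module `M` with a linear map `α : M → R` such that
`α x • y = α y • x` for all `x y`. -/
def IsQuasiIdeal (M : Type u) [AddCommGroup M] [Module R M] (α : M →ₗ[R] R) : Prop :=
  ∀ x y : M, α x • y = α y • x

/-- The multiplication map `μ : M ⊗[R] M → M` of a quasi-ideal, determined by
`μ (x ⊗ y) = α x • y`. -/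
noncomputable def quasiIdealMul (M : Type u) [AddCommGroup M] [Module R M]
    (α : M →ₗ[R] R) : M ⊗[R] M →ₗ[R] M :=
  TensorProduct.lift ((LinearMap.lsmul R M).comp α)

/-- The multiplication map `J ⊗[R] J → R` of an ideal, determined by `a ⊗ b ↦ a * b`. -/
noncomputable def idealMul (J : Ideal R) : (↥J ⊗[R] ↥J) →ₗ[R] R :=
  TensorProduct.lift (((LinearMap.mul R R).comp J.subtype).compl₂ J.subtype)

end Stmt16

/-!
Write `J N = N` when the action map `J ⊗ N → N` is surjective. If `f : M → P` is surjective and `J`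
kills `ker f`, then `J N = N` forces `ker f ⊗ N → M ⊗ N` to vanish, since
`k ⊗ r • n = r • k ⊗ n = 0`; so `f ⊗ N` is bijective by right exactness of the tensor product. Two
maps have kernel killed by `J`: the action map `J ⊗ N → N`, because `r • t` is `r ⊗ n` with `n` the
image of `t`, and the structure map `α : M → J` of a quasi-ideal with range `J`.

For idempotent `J` and `I = J ⊗ J`, the multiplication `I ⊗ I → I` is the composite
`I ⊗ I → J ⊗ I ≃ I ⊗ J → J ⊗ J` of two instances of `f ⊗ N` with `f : J ⊗ J → J` the action map.
For an idempotent quasi-ideal `(M, α)` with range `J`, both maps in `J ⊗ J ← J ⊗ M → M` are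
bijective.
-/

namespace Stmt16

section IdealAction

variable {R : Type*} [CommRing R] (J : Ideal R)
  (N : Type*) [AddCommGroup N] [Module R N] (P : Type*) [AddCommGroup P] [Module R P]

/-- The action map `J ⊗[R] N → N`, `r ⊗ n ↦ r • n`, of an ideal `J` on a module `N`. The condition
`J N = N` is expressed throughout as its surjectivity. -/
noncomputable def idealAction : J ⊗[R] N →ₗ[R] N :=
  TensorProduct.lift ((LinearMap.lsmul R N).comp J.subtype)

@[simp]
lemma idealAction_tmul (r : J) (n : N) : idealAction J N (r ⊗ₜ n) = (r : R) • n := rfl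

variable {J N P}

lemma coe_smul_comm (r s : J) : (r : R) • s = (s : R) • r := Subtype.ext (mul_comm _ _)

lemma smul_eq_tmul_idealAction (r : J) (t : J ⊗[R] N) :
    (r : R) • t = r ⊗ₜ[R] idealAction J N t := by
  induction t with
  | zero => simp
  | add t t' ht ht' => rw [smul_add, ht, ht', map_add, TensorProduct.tmul_add]
  | tmul s n =>
    rw [TensorProduct.smul_tmul', coe_smul_comm r s, TensorProduct.smul_tmul, idealAction_tmul]

lemma smul_eq_idealAction_tmul (r : J) (t : J ⊗[R] J) :
    (r : R) • t = idealAction J J t ⊗ₜ[R] r := by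
  induction t with
  | zero => simp
  | add t t' ht ht' => rw [smul_add, ht, ht', map_add, TensorProduct.add_tmul]
  | tmul a b =>
    rw [← TensorProduct.tmul_smul, coe_smul_comm r b, ← TensorProduct.smul_tmul,
      coe_smul_comm b a, idealAction_tmul]

lemma smul_eq_zero_of_mem_ker_idealAction {r : R} (hr : r ∈ J) {t : J ⊗[R] N}
    (ht : t ∈ LinearMap.ker (idealAction J N)) : r • t = 0 := by
  rw [smul_eq_tmul_idealAction ⟨r, hr⟩ t, LinearMap.mem_ker.mp ht, TensorProduct.tmul_zero]

lemma idealAction_comp_lTensor (f : N →ₗ[R] P) :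
    idealAction J P ∘ₗ f.lTensor J = f ∘ₗ idealAction J N :=
  TensorProduct.ext' fun r n => (f.map_smul (r : R) n).symm

lemma idealAction_tensorProduct :
    idealAction J (N ⊗[R] P) =
      (idealAction J N).rTensor P ∘ₗ (TensorProduct.assoc R J N P).symm.toLinearMap :=
  TensorProduct.ext_threefold' fun _ _ _ => rfl

lemma idealAction_surjective_of_surjective {f : N →ₗ[R] P} (hf : Function.Surjective f)
    (hN : Function.Surjective (idealAction J N)) : Function.Surjective (idealAction J P) := by
  have hcomp : Function.Surjective (idealAction J P ∘ₗ f.lTensor J) := by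
    rw [idealAction_comp_lTensor]
    exact hf.comp hN
  exact Function.Surjective.of_comp (g := f.lTensor J) hcomp

lemma idealAction_tensorProduct_surjective (hN : Function.Surjective (idealAction J N)) :
    Function.Surjective (idealAction J (N ⊗[R] P)) := by
  rw [idealAction_tensorProduct]
  exact (LinearMap.rTensor_surjective P hN).comp (TensorProduct.assoc R J N P).symm.surjective

lemma rTensor_bijective_of_smul_ker_eq_zero {M : Type*} [AddCommGroup M] [Module R M]
    {f : M →ₗ[R] P} (hf : Function.Surjective f)
    (hker : ∀ r ∈ J, ∀ k ∈ LinearMap.ker f, r • k = 0)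
    (hN : Function.Surjective (idealAction J N)) : Function.Bijective (f.rTensor N) := by
  have hzero : (LinearMap.ker f).subtype.rTensor N = 0 := by
    refine TensorProduct.ext' fun k n => ?_
    obtain ⟨t, rfl⟩ := hN n
    rw [LinearMap.rTensor_tmul, Submodule.subtype_apply, LinearMap.zero_apply]
    induction t with
    | zero => simp
    | add t t' ht ht' => rw [map_add, TensorProduct.tmul_add, ht, ht', add_zero]
    | tmul r n =>
      rw [idealAction_tmul, ← TensorProduct.smul_tmul, hker r r.2 k k.2, TensorProduct.zero_tmul]
  have hexact := rTensor_exact N f.exact_subtype_ker_map hf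
  rw [hzero] at hexact
  exact ⟨(LinearMap.exact_zero_iff_injective _ _).mp hexact, LinearMap.rTensor_surjective N hf⟩

lemma rTensor_idealAction_bijective (hN : Function.Surjective (idealAction J N))
    (hP : Function.Surjective (idealAction J P)) :
    Function.Bijective ((idealAction J N).rTensor P) :=
  rTensor_bijective_of_smul_ker_eq_zero hN
    (fun _ hr _ => smul_eq_zero_of_mem_ker_idealAction hr) hP

lemma idealAction_tensorProduct_bijective (hN : Function.Surjective (idealAction J N))
    (hP : Function.Surjective (idealAction J P)) :
    Function.Bijective (idealAction J (N ⊗[R] P)) := by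
  rw [idealAction_tensorProduct]
  exact (rTensor_idealAction_bijective hN hP).comp (TensorProduct.assoc R J N P).symm.bijective

end IdealAction

section IdealMul

variable {R : Type u} [CommRing R] {J : Ideal R}

lemma idealMul_eq_subtype_comp_idealAction : idealMul R J = J.subtype ∘ₗ idealAction J J :=
  TensorProduct.ext' fun _ _ => rfl

lemma idealMul_eq_coe_idealAction (t : J ⊗[R] J) : idealMul R J t = idealAction J J t :=
  LinearMap.congr_fun idealMul_eq_subtype_comp_idealAction t

lemma range_idealMul : LinearMap.range (idealMul R J) = J * J := by
  have idealMul_eq_mulMap : idealMul R J = Submodule.mulMap J J :=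
    TensorProduct.ext' fun _ _ => rfl
  rw [idealMul_eq_mulMap, Submodule.mulMap_range]

lemma idealAction_self_surjective_iff : Function.Surjective (idealAction J J) ↔ J * J = J := by
  rw [← range_idealMul, idealMul_eq_subtype_comp_idealAction, LinearMap.range_comp,
    ← LinearMap.range_eq_top,
    ← (Submodule.map_injective_of_injective J.subtype_injective).eq_iff, Submodule.map_subtype_top]

lemma isQuasiIdeal_idealMul : IsQuasiIdeal R (J ⊗[R] J) (idealMul R J) := by
  intro x y
  calc idealMul R J x • y
      = idealAction J J x ⊗ₜ[R] idealAction J J y := by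
        rw [idealMul_eq_coe_idealAction, smul_eq_tmul_idealAction]
    _ = idealMul R J y • x := by
        rw [idealMul_eq_coe_idealAction, smul_eq_idealAction_tmul]

lemma quasiIdealMul_idealMul_bijective (hJ : J * J = J) :
    Function.Bijective (quasiIdealMul R (J ⊗[R] J) (idealMul R J)) := by
  have hsurj : Function.Surjective (idealAction J J) := idealAction_self_surjective_iff.mpr hJ
  have hfactor : quasiIdealMul R (J ⊗[R] J) (idealMul R J) =
      idealAction J (J ⊗[R] J) ∘ₗ (idealAction J J).rTensor (J ⊗[R] J) :=
    TensorProduct.ext' fun x y => congrArg (· • y) (idealMul_eq_coe_idealAction x)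
  rw [hfactor]
  exact (idealAction_tensorProduct_bijective hsurj hsurj).comp
    (rTensor_idealAction_bijective hsurj (idealAction_tensorProduct_surjective hsurj))

end IdealMul

section QuasiIdeal

variable {R : Type u} [CommRing R] {M : Type u} [AddCommGroup M] [Module R M] {α : M →ₗ[R] R}

lemma quasiIdealMul_eq_idealAction_comp_rTensor :
    quasiIdealMul R M α =
      idealAction (LinearMap.range α) M ∘ₗ α.rangeRestrict.rTensor M :=
  TensorProduct.ext' fun _ _ => rfl

lemma idealAction_range_surjective (hμ : Function.Surjective (quasiIdealMul R M α)) :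
    Function.Surjective (idealAction (LinearMap.range α) M) := by
  rw [quasiIdealMul_eq_idealAction_comp_rTensor] at hμ
  exact Function.Surjective.of_comp (g := α.rangeRestrict.rTensor M) hμ

lemma range_mul_range_of_quasiIdealMul_surjective
    (hμ : Function.Surjective (quasiIdealMul R M α)) :
    LinearMap.range α * LinearMap.range α = LinearMap.range α :=
  idealAction_self_surjective_iff.mp <|
    idealAction_surjective_of_surjective α.surjective_rangeRestrict <|
      idealAction_range_surjective hμ

lemma IsQuasiIdeal.rTensor_rangeRestrict_bijective (hα : IsQuasiIdeal R M α)
    {N : Type*} [AddCommGroup N] [Module R N]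
    (hN : Function.Surjective (idealAction (LinearMap.range α) N)) :
    Function.Bijective (α.rangeRestrict.rTensor N) := by
  refine rTensor_bijective_of_smul_ker_eq_zero α.surjective_rangeRestrict ?_ hN
  rintro _ ⟨x, rfl⟩ k hk
  rw [LinearMap.ker_rangeRestrict, LinearMap.mem_ker] at hk
  rw [hα x k, hk, zero_smul]

lemma IsQuasiIdeal.idealAction_range_bijective (hα : IsQuasiIdeal R M α)
    (hμ : Function.Bijective (quasiIdealMul R M α)) :
    Function.Bijective (idealAction (LinearMap.range α) M) := by
  have hrTensor := hα.rTensor_rangeRestrict_bijective (idealAction_range_surjective hμ.surjective)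
  rw [quasiIdealMul_eq_idealAction_comp_rTensor, LinearMap.coe_comp] at hμ
  exact (Function.Bijective.of_comp_iff _ hrTensor).mp hμ

lemma IsQuasiIdeal.exists_linearEquiv_comp_eq_idealMul (hα : IsQuasiIdeal R M α)
    (hμ : Function.Bijective (quasiIdealMul R M α)) :
    ∃ φ : (LinearMap.range α ⊗[R] LinearMap.range α) ≃ₗ[R] M,
      ∀ x, α (φ x) = idealMul R (LinearMap.range α) x := by
  have hidem : Function.Surjective (idealAction (LinearMap.range α) (LinearMap.range α)) :=
    idealAction_self_surjective_iff.mpr (range_mul_range_of_quasiIdealMul_surjective hμ.surjective)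
  have hlTensor : Function.Bijective (α.rangeRestrict.lTensor (LinearMap.range α)) := by
    rw [Function.Bijective, LinearMap.lTensor_inj_iff_rTensor_inj,
      LinearMap.lTensor_surj_iff_rTensor_surj]
    exact hα.rTensor_rangeRestrict_bijective hidem
  let restrict := LinearEquiv.ofBijective _ hlTensor
  let action := LinearEquiv.ofBijective _ (hα.idealAction_range_bijective hμ)
  refine ⟨restrict.symm ≪≫ₗ action, fun x => ?_⟩
  obtain ⟨t, rfl⟩ := restrict.surjective x
  calc α ((restrict.symm ≪≫ₗ action) (restrict t))
      = α (idealAction (LinearMap.range α) M t) := by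
        rw [LinearEquiv.trans_apply, restrict.symm_apply_apply, LinearEquiv.ofBijective_apply]
    _ = idealAction (LinearMap.range α) (LinearMap.range α) (restrict t) :=
        congrArg Subtype.val (LinearMap.congr_fun (idealAction_comp_lTensor α.rangeRestrict) t).symm
    _ = idealMul R (LinearMap.range α) (restrict t) := (idealMul_eq_coe_idealAction _).symm

end QuasiIdeal

end Stmt16

open Stmt16 in
theorem quasiIdeal_correspondence_general (R : Type u) [CommRing R] :
    (∀ J : Ideal R, J * J = J →
      IsQuasiIdeal R (J ⊗[R] J) (idealMul R J) ∧
      Function.Bijective (quasiIdealMul R (J ⊗[R] J) (idealMul R J)) ∧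
      LinearMap.range (idealMul R J) = J) ∧
    (∀ (M : Type u) [AddCommGroup M] [Module R M] (α : M →ₗ[R] R),
      IsQuasiIdeal R M α → Function.Bijective (quasiIdealMul R M α) →
        LinearMap.range α * LinearMap.range α = LinearMap.range α ∧
        ∃ φ : (LinearMap.range α ⊗[R] LinearMap.range α) ≃ₗ[R] M,
          ∀ x, α (φ x) = idealMul R (LinearMap.range α) x) :=
  ⟨fun _ hJ => ⟨isQuasiIdeal_idealMul, quasiIdealMul_idealMul_bijective hJ,
      range_idealMul.trans hJ⟩,
    fun _ _ _ _ hα hμ => ⟨range_mul_range_of_quasiIdealMul_surjective hμ.surjective,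
      hα.exists_linearEquiv_comp_eq_idealMul hμ⟩⟩

open Stmt16 in
/-- The correspondence between idempotent quasi-ideals with flat underlying module and
idempotent ideals `J` with `J ⊗[R] J` flat:
(1) for an ideal `J` with `J * J = J` and `J ⊗[R] J` flat, the pair `(J ⊗[R] J, m)` is an
idempotent quasi-ideal with flat underlying module and the range of `m` is `J`;
(2) for an idempotent quasi-ideal `(M, α)` with `M` flat, the ideal `J = range α` satisfies
`J * J = J` and there is an isomorphism `φ : J ⊗[R] J ≃ M` with `α ∘ φ = m` (so `J ⊗[R] J`
is flat). -/
theorem quasiIdeal_correspondence (R : Type u) [CommRing R] :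
    (∀ J : Ideal R, J * J = J → Module.Flat R (↥J ⊗[R] ↥J) →
      IsQuasiIdeal R (↥J ⊗[R] ↥J) (idealMul R J) ∧
      Function.Bijective (quasiIdealMul R (↥J ⊗[R] ↥J) (idealMul R J)) ∧
      Module.Flat R (↥J ⊗[R] ↥J) ∧
      LinearMap.range (idealMul R J) = J) ∧
    (∀ (M : Type u) [AddCommGroup M] [Module R M] (α : M →ₗ[R] R),
      IsQuasiIdeal R M α → Function.Bijective (quasiIdealMul R M α) → Module.Flat R M →
        LinearMap.range α * LinearMap.range α = LinearMap.range α ∧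
        (∃ φ : (↥(LinearMap.range α) ⊗[R] ↥(LinearMap.range α)) ≃ₗ[R] M,
          ∀ x : ↥(LinearMap.range α) ⊗[R] ↥(LinearMap.range α),
            α (φ x) = idealMul R (LinearMap.range α) x) ∧
        Module.Flat R (↥(LinearMap.range α) ⊗[R] ↥(LinearMap.range α))) := by
  obtain ⟨ofIdeal, ofQuasiIdeal⟩ := quasiIdeal_correspondence_general R
  exact ⟨fun J hJ hflat => have ⟨hquasi, hbij, hrange⟩ := ofIdeal J hJ
      ⟨hquasi, hbij, hflat, hrange⟩,
    fun M _ _ α hα hμ _ => have ⟨hidem, φ, hφ⟩ := ofQuasiIdeal M α hα hμ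
      ⟨hidem, ⟨φ, hφ⟩, .of_linearEquiv φ⟩⟩
end
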